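/- Let k ≥ 2 be an integer and (p_n)_{n∈ℕ} an arbitrary sequence of variable words over k. Then for every set A of words over k satisfying limsup_{n→∞} |A ∩ [k]^n| / k^n > 0 there exist a word c over k and a sequence (w_n)_{n∈ℕ} of variable words over k of pattern (p_n) such that the set {c} ∪ {c⌢w_0(a_0)⌢···⌢w_n(a_n) : n ∈ ℕ and a_0,…,a_n ∈ [k]} is contained in A. -/

import Mathlib

/-- A word over `k`: a finite sequence with values in `[k]`. -/
abbrev Word (k : ℕ) := List (Fin k)

/-- A "possibly variable" letter sequence: `none` plays the role of the variable `v`. -/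
abbrev VWord (k : ℕ) := List (Option (Fin k))

/-- Substitution of the letter `a` for every occurrence of the variable. -/
def subst {k : ℕ} (w : VWord k) (a : Fin k) : Word k := w.map (fun o => o.getD a)

/-- `w` is a variable word: the variable `v` occurs in it. -/
def IsVar {k : ℕ} (w : VWord k) : Prop := none ∈ w

/-- The word `c ⌢ w₀(a₀) ⌢ ⋯ ⌢ wₙ(aₙ)`. -/
def csWord {k : ℕ} (c : Word k) (ws : ℕ → VWord k) (n : ℕ) (a : ℕ → Fin k) : Word k :=
  c ++ ((List.range (n + 1)).map fun i => subst (ws i) (a i)).flatten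

/-- The set `{c} ∪ {c ⌢ w₀(a₀) ⌢ ⋯ ⌢ wₙ(aₙ) : n ∈ ℕ, a₀,…,aₙ ∈ [k]}`. -/
def csSetInf {k : ℕ} (c : Word k) (ws : ℕ → VWord k) : Set (Word k) :=
  insert c {x | ∃ n : ℕ, ∃ a : ℕ → Fin k, x = csWord c ws n a}

/-- The density `|A ∩ [k]^n| / k^n`. -/
noncomputable def dens (k n : ℕ) (A : Set (Word k)) : ℝ :=
  (Set.ncard {x ∈ A | x.length = n} : ℝ) / (k : ℝ) ^ n

/-!
The combinatorial core is the density Hales–Jewett theorem in the following probabilistic form: if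
the words `x` over a finite alphabet `α` index events `E x` of probability at least `δ > 0`, then
for some `c` and `w` the events of `c` and of all the words `c ⌢ a ⌢ w(a)` occur together with
positive probability. It is proved by induction on the alphabet. To pass from `α` to `Option α`,
consider for every word the lines over `α` above it. They supply events of probability bounded
below on which `E` contains all of a line except the words in which the variable takes the new
letter. If `E` contains no line, the events of those words avoid these intersections of insensitive
events, hence `E` exceeds its density somewhere on their complements, which again decompose into
intersections of insensitive events. Insensitive events are almost covered by the events of trees,
by the Hales–Jewett theorem for smaller alphabets, so `E` gains density on some tree after
conditioning. This cannot be repeated indefinitely.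

For a set `A` of words of positive upper density, take the limit `μ` of the uniform distributions
along an ultrafilter and a word `u` below which the relative density `s` of `A` is almost maximal.
For a word `x` and a random word `y`, walk through the tree of words above `u`, copying letters of
`y` and writing `p(a)` in place of each letter `a` of `x`. By maximality of `s` almost all words met
by the walk have relative density close to `s`, so that the endpoint lies in `A` together with its
continuation by `y` with probability close to `s²`. A line in these events, indexed by `x`, gives a
word `c ∈ A` and a variable word `w` with initial segment `p` such that the words `y` with
`c ⌢ w(a) ⌢ y ∈ A` for all `a` are again of positive upper density, and the construction can be
iterated.
-/

namespace CarlsonSimpson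

/-! ### Words and Carlson–Simpson trees -/

section Words

variable {α β : Type*}

/-- Substitution of a letter for the variable `none`. This is `subst` over an arbitrary alphabet:
the proof passes from an alphabet `α` to `Option α`, whose letters are those of `α` and `v`. -/
def fill (w : List (Option α)) (a : α) : List α := w.map (·.getD a)

@[simp] lemma fill_nil (a : α) : fill [] a = [] := rfl

@[simp] lemma fill_cons (o : Option α) (w : List (Option α)) (a : α) :
    fill (o :: w) a = o.getD a :: fill w a := rfl

@[simp] lemma fill_append (u w : List (Option α)) (a : α) :
    fill (u ++ w) a = fill u a ++ fill w a := List.map_append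

@[simp] lemma fill_map_some (c : List α) (a : α) : fill (c.map some) a = c := by
  simp [fill, Function.comp_def]

@[simp] lemma length_fill (w : List (Option α)) (a : α) : (fill w a).length = w.length :=
  List.length_map _

lemma length_append_cons_fill (c : List α) (a b : α) (w : List (Option α)) :
    (c ++ a :: fill w b).length = c.length + 1 + w.length := by
  rw [List.length_append, List.length_cons, length_fill, Nat.add_right_comm, Nat.add_assoc]

lemma map_fill (φ : α → β) (w : List (Option α)) (a : α) :
    (fill w a).map φ = fill (w.map (Option.map φ)) (φ a) := by
  simp [fill, Function.comp_def]

lemma fill_getD (o : Option α) (w : List (Option α)) (a : α) :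
    fill w (o.getD a) = fill (w.map (·.or o)) a := by
  simp [fill, Function.comp_def, Option.getD_or]

end Words

section Trees

variable {α β : Type*} {d d' e q R R' : ℕ} {f g : List α → List α}

/-- Carlson–Simpson trees `t ↦ c ⌢ t₀ ⌢ w₀(t₀) ⌢ t₁ ⌢ w₁(t₁) ⌢ ⋯` of infinite height. The
variable words `v ⌢ wⱼ` start with the variable. -/
def IsTree (f : List α → List α) : Prop :=
  ∃ w : ℕ → List (Option α), ∀ t a, f (t ++ [a]) = f t ++ a :: fill (w t.length) a

/-- A Carlson–Simpson tree whose first `d` levels consist of words of length at most `R`. -/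
structure IsBoundedTree (d R : ℕ) (f : List α → List α) : Prop where
  isTree : IsTree f
  length_le : ∀ t, t.length ≤ d → (f t).length ≤ R

lemma IsBoundedTree.mono (hf : IsBoundedTree d R f) (hd : d' ≤ d) (hR : R ≤ R') :
    IsBoundedTree d' R' f :=
  ⟨hf.isTree, fun t ht => (hf.length_le t (ht.trans hd)).trans hR⟩

lemma isTree_id : IsTree (id : List α → List α) := ⟨fun _ => [], fun _ _ => rfl⟩

lemma isBoundedTree_id (d : ℕ) : IsBoundedTree d d (id : List α → List α) :=
  ⟨isTree_id, fun _ ht => ht⟩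

lemma IsTree.exists_length_eq (hf : IsTree f) : ∃ ℓ : ℕ → ℕ, ∀ t, (f t).length = ℓ t.length := by
  obtain ⟨w, hw⟩ := hf
  refine ⟨fun j => (f []).length + ∑ i ∈ Finset.range j, (1 + (w i).length), fun t => ?_⟩
  induction t using List.reverseRecOn with
  | nil => simp
  | append_singleton t a ih =>
    rw [hw, length_append_cons_fill, ih, List.length_append, List.length_singleton]
    simp only [Finset.sum_range_succ]
    ring

lemma IsTree.length_congr (hf : IsTree f) {t t' : List α} (h : t.length = t'.length) :
    (f t).length = (f t').length := by
  obtain ⟨ℓ, hℓ⟩ := hf.exists_length_eq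
  rw [hℓ, hℓ, h]

lemma IsTree.map_congr (hf : IsTree f) (φ : α → β) {t t' : List α} (h : t.map φ = t'.map φ) :
    (f t).map φ = (f t').map φ := by
  obtain ⟨w, hw⟩ := hf
  have key : ∀ t a, (f (t ++ [a])).map φ
      = (f t).map φ ++ φ a :: fill ((w t.length).map (Option.map φ)) (φ a) := fun t a => by
    simp [hw, map_fill]
  induction t using List.reverseRecOn generalizing t' with
  | nil => rw [List.map_eq_nil_iff.1 h.symm]
  | append_singleton t a ih =>
    obtain ⟨s, l, rfl, hs, hl⟩ := List.map_eq_append_iff.1 (h.symm.trans List.map_append)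
    obtain ⟨b, rfl, hb⟩ := List.map_eq_singleton_iff.1 hl
    have hlen : s.length = t.length := by simpa using congrArg List.length hs
    rw [key, key, ih hs.symm, hb, hlen]

lemma IsTree.exists_append_cons (hf : IsTree f) (u : List (Option α)) (j : ℕ) :
    ∃ W : List (Option α), ∀ s, s.length = j → ∀ a,
      f (s ++ a :: fill u a) = f s ++ a :: fill W a := by
  obtain ⟨w, hw⟩ := hf
  induction u using List.reverseRecOn with
  | nil => exact ⟨w j, fun s hs a => by simpa [hs] using hw s a⟩
  | append_singleton u o ih =>
    obtain ⟨W, hW⟩ := ih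
    refine ⟨W ++ o :: (w (j + (u.length + 1))).map (·.or o), fun s hs a => ?_⟩
    have := hw (s ++ a :: fill u a) (o.getD a)
    rw [hW s hs, fill_getD] at this
    simpa [hs] using this

lemma IsBoundedTree.exists_append_cons [Nonempty α] (hf : IsBoundedTree d R f) (c : List α)
    (u : List (Option α)) (hu : c.length + 1 + u.length ≤ d) :
    ∃ W : List (Option α), (f c).length + 1 + W.length ≤ R ∧
      ∀ a, f (c ++ a :: fill u a) = f c ++ a :: fill W a := by
  obtain ⟨W, hW⟩ := hf.isTree.exists_append_cons u c.length
  refine ⟨W, ?_, hW c rfl⟩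
  obtain ⟨a⟩ := ‹Nonempty α›
  have := hf.length_le (c ++ a :: fill u a) (by rwa [length_append_cons_fill])
  rwa [hW c rfl, length_append_cons_fill] at this

lemma IsTree.comp (hf : IsTree f) (hg : IsTree g) : IsTree (f ∘ g) := by
  obtain ⟨ℓ, hℓ⟩ := hg.exists_length_eq
  obtain ⟨w, hw⟩ := hg
  choose W hW using fun j => hf.exists_append_cons (w j) (ℓ j)
  exact ⟨W, fun t a => by simp only [Function.comp_apply, hw, hW _ _ (hℓ t)]⟩

lemma IsBoundedTree.comp (hf : IsBoundedTree d R f) (hg : IsBoundedTree e d g) :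
    IsBoundedTree e R (f ∘ g) :=
  ⟨hf.isTree.comp hg.isTree, fun t ht => hf.length_le _ (hg.length_le t ht)⟩

lemma IsTree.append_left (hf : IsTree f) (x : List α) : IsTree fun t => x ++ f t := by
  obtain ⟨w, hw⟩ := hf
  exact ⟨w, fun t a => by simp [hw]⟩

lemma IsBoundedTree.append_left (hf : IsBoundedTree d R f) (x : List α) :
    IsBoundedTree d (x.length + R) fun t => x ++ f t :=
  ⟨hf.isTree.append_left x, fun t ht => by simpa using hf.length_le t ht⟩

lemma IsTree.conj_map {f : List β → List β} (hf : IsTree f) (τ : α → β) {φ : β → α}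
    (hφ : Function.LeftInverse φ τ) : IsTree fun s => (f (s.map τ)).map φ := by
  obtain ⟨w, hw⟩ := hf
  exact ⟨fun j => (w j).map (Option.map φ), fun t a => by simp [hw, map_fill, hφ a]⟩

lemma IsBoundedTree.conj_map {f : List β → List β} (hf : IsBoundedTree d R f) (τ : α → β)
    {φ : β → α} (hφ : Function.LeftInverse φ τ) :
    IsBoundedTree d R fun s => (f (s.map τ)).map φ :=
  ⟨hf.isTree.conj_map τ hφ, fun t ht => by simpa using hf.length_le (t.map τ) (by simpa using ht)⟩

/-- The tree with root `c` and variable words `v ⌢ wⱼ`. -/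
def treeOf (c : List α) (w : ℕ → List (Option α)) (t : List α) : List α :=
  c ++ t.zipIdx.flatMap fun p => p.1 :: fill (w p.2) p.1

@[simp] lemma treeOf_nil (c : List α) (w : ℕ → List (Option α)) : treeOf c w [] = c := by
  simp [treeOf]

@[simp] lemma treeOf_append_singleton (c : List α) (w : ℕ → List (Option α)) (t : List α) (a : α) :
    treeOf c w (t ++ [a]) = treeOf c w t ++ a :: fill (w t.length) a := by
  simp [treeOf, List.zipIdx_append]

lemma isTree_treeOf (c : List α) (w : ℕ → List (Option α)) : IsTree (treeOf c w) :=
  ⟨w, treeOf_append_singleton c w⟩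

lemma IsTree.exists_map_eq_map (hf : IsTree f) (ι : α → β) :
    ∃ F : List β → List β, IsTree F ∧ ∀ t, F (t.map ι) = (f t).map ι := by
  obtain ⟨w, hw⟩ := hf
  refine ⟨treeOf ((f []).map ι) fun j => (w j).map (Option.map ι), isTree_treeOf _ _, fun t => ?_⟩
  induction t using List.reverseRecOn with
  | nil => simp
  | append_singleton t a ih => simp [hw, ih, map_fill]

lemma IsBoundedTree.exists_map_eq_map [Nonempty α] (hf : IsBoundedTree d R f) (ι : α → β) :
    ∃ F : List β → List β, IsBoundedTree d R F ∧ ∀ t, F (t.map ι) = (f t).map ι := by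
  obtain ⟨F, hF, hFf⟩ := hf.isTree.exists_map_eq_map ι
  refine ⟨F, ⟨hF, fun s hs => ?_⟩, hFf⟩
  obtain ⟨a⟩ := ‹Nonempty α›
  have := hf.length_le (List.replicate s.length a) (by simpa using hs)
  rwa [← List.length_map (as := f _) ι, ← hFf, hF.length_congr (t' := s) (by simp)] at this

/-- The tree with root `c`, first variable word `v ⌢ w`, and copies of the tree `f` above. -/
def treeCons (c : List α) (w : List (Option α)) (f : List α → List α) : List α → List α
  | [] => c
  | a :: t => c ++ a :: fill w a ++ f t

lemma IsTree.treeCons (hf : IsTree f) (c : List α) (w : List (Option α)) :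
    IsTree (treeCons c w f) := by
  obtain ⟨v, hv⟩ := hf
  refine ⟨fun j => j.casesOn (w ++ (f []).map some) v, fun t a => ?_⟩
  cases t <;> simp [CarlsonSimpson.treeCons, hv]

lemma IsBoundedTree.treeCons (hf : IsBoundedTree d R f) (c : List α) (w : List (Option α)) :
    IsBoundedTree (d + 1) (c.length + 1 + w.length + R) (treeCons c w f) := by
  refine ⟨hf.isTree.treeCons c w, fun t ht => ?_⟩
  cases t with
  | nil => simp only [CarlsonSimpson.treeCons]; omega
  | cons a t =>
    have := hf.length_le t (by simpa using ht)
    simp only [CarlsonSimpson.treeCons, List.length_append, List.length_cons, length_fill]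
    omega

end Trees

section Colourings

lemma exists_line_mono (α κ : Type) [Finite α] [Finite κ] : ∃ N : ℕ, ∀ C : List α → κ,
    ∃ (c : List α) (w : List (Option α)) (col : κ), c.length + 1 + w.length = N ∧
      ∀ a, C (c ++ a :: fill w a) = col := by
  obtain ⟨ι, _, hι⟩ := Combinatorics.Line.exists_mono_in_high_dimension α κ
  let e := Fintype.equivFin ι
  refine ⟨Fintype.card ι, fun C => ?_⟩
  obtain ⟨l, col, hl⟩ := hι fun x => C (List.ofFn (x ∘ e.symm))
  obtain ⟨i, hi⟩ := l.proper
  have hnone : none ∈ List.ofFn (l.idxFun ∘ e.symm) := List.mem_ofFn.2 ⟨e i, by simp [hi]⟩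
  obtain ⟨c', w, hcw, hc'⟩ := List.eq_append_cons_of_mem hnone
  obtain ⟨c, rfl⟩ : c' ∈ Set.range (List.map some) := by
    rw [Set.range_list_map]
    exact fun o ho => Option.ne_none_iff_exists.1 fun h => hc' (h ▸ ho)
  refine ⟨c, w, col, ?_, fun a => ?_⟩
  · simpa [add_assoc, add_comm, add_left_comm] using (congrArg List.length hcw).symm
  · have : fill (List.ofFn (l.idxFun ∘ e.symm)) a = c ++ a :: fill w a := by simp [hcw]
    rw [← this, ← hl a, fill, List.map_ofFn]
    rfl

lemma exists_tree_level_mono (α κ : Type) [Finite α] [Nonempty α] [Finite κ] (d : ℕ) :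
    ∃ R : ℕ, ∀ χ : List α → κ, ∃ f, IsBoundedTree d R f ∧
      ∀ t t', t.length = t'.length → t.length ≤ d → χ (f t) = χ (f t') := by
  induction d generalizing κ with
  | zero =>
    refine ⟨0, fun χ => ⟨id, isBoundedTree_id 0, fun t t' h h0 => ?_⟩⟩
    rw [List.length_eq_zero_iff.1 (Nat.le_zero.1 h0),
      List.length_eq_zero_iff.1 (h.symm.trans (Nat.le_zero.1 h0))]
  | succ d ih =>
    obtain ⟨N, hN⟩ := exists_line_mono α (Fin (d + 1) → κ)
    have : Finite {x : List α // x.length = N} := (List.finite_length_eq α N).to_subtype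
    obtain ⟨R, hR⟩ := ih ({x : List α // x.length = N} → κ)
    refine ⟨N + R, fun χ => ?_⟩
    obtain ⟨f, hf, hff⟩ := hR fun y x => χ (x.1 ++ y)
    obtain ⟨o⟩ := ‹Nonempty α›
    obtain ⟨c, w, col, hlen, hcol⟩ := hN fun x j => χ (x ++ f (List.replicate j o))
    have hχ (a : α) (t : List α) (ht : t.length < d + 1) :
        χ (treeCons c w f (a :: t)) = col ⟨t.length, ht⟩ := by
      rw [← hcol a]
      exact congrFun (hff t (List.replicate t.length o) (by simp) (Nat.lt_succ_iff.1 ht))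
        ⟨c ++ a :: fill w a, by rwa [length_append_cons_fill]⟩
    refine ⟨treeCons c w f, hlen ▸ hf.treeCons c w, fun t t' h hd => ?_⟩
    match t, t' with
    | [], [] => rfl
    | a :: t, b :: t' =>
      simp only [List.length_cons, Nat.add_right_cancel_iff] at h hd
      rw [hχ a t (by omega), hχ b t' (by omega)]
      congr 1
      simp [h]

lemma exists_tree_length_eq {α : Type*} [Nonempty α] {q : ℕ} {n : ℕ → ℕ}
    (hn : StrictMonoOn n (Set.Iic q)) :
    ∃ g : List α → List α, IsTree g ∧ ∀ t, t.length ≤ q → (g t).length = n t.length := by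
  obtain ⟨o⟩ := ‹Nonempty α›
  refine ⟨treeOf (List.replicate (n 0) o) fun j => List.replicate (n (j + 1) - n j - 1) (some o),
    isTree_treeOf _ _, fun t ht => ?_⟩
  induction t using List.reverseRecOn with
  | nil => simp
  | append_singleton t a ih =>
    simp only [List.length_append, List.length_singleton] at ht
    have := hn (Set.mem_Iic.2 (by omega)) (Set.mem_Iic.2 ht) (Nat.lt_succ_self t.length)
    rw [treeOf_append_singleton, length_append_cons_fill, ih (by omega), List.length_replicate,
      List.length_append, List.length_singleton]
    omega

lemma exists_strictMonoOn_mono (κ : Type*) [Finite κ] (q : ℕ) : ∃ d : ℕ, ∀ χ : ℕ → κ,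
    ∃ (c : κ) (n : ℕ → ℕ), StrictMonoOn n (Set.Iic q) ∧ ∀ j ≤ q, n j ≤ d ∧ χ (n j) = c := by
  classical
  have := Fintype.ofFinite κ
  refine ⟨Fintype.card κ * q, fun χ => ?_⟩
  obtain ⟨c, -, hc⟩ := Finset.exists_lt_card_fiber_of_mul_lt_card_of_maps_to
    (s := Finset.range (Fintype.card κ * q + 1)) (t := Finset.univ) (f := χ) (n := q)
    (by simp) (by simp)
  set S := {j ∈ Finset.range (Fintype.card κ * q + 1) | χ j = c}
  have hS : (Set.ofPred (· ∈ S)).Finite := S.finite_toSet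
  have hcard : q < hS.toFinset.card := by simpa using hc
  refine ⟨c, Nat.nth (· ∈ S), (Nat.nth_strictMonoOn hS).mono fun j hj =>
    (Set.mem_Iic.1 hj).trans_lt hcard, fun j hj => ?_⟩
  have := Nat.nth_mem_of_lt_card hS (hj.trans_lt hcard)
  simpa [S, Nat.lt_succ_iff] using this

lemma exists_tree_mono (α κ : Type) [Finite α] [Nonempty α] [Finite κ] (q : ℕ) :
    ∃ R : ℕ, ∀ P : List α → κ → Prop, (∀ x, x.length ≤ R → ∃ c, P x c) →
      ∃ f c, IsBoundedTree q R f ∧ ∀ t, t.length ≤ q → P (f t) c := by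
  obtain ⟨d, hd⟩ := exists_strictMonoOn_mono κ q
  obtain ⟨R, hR⟩ := exists_tree_level_mono α κ d
  refine ⟨R, fun P hP => ?_⟩
  have hP' (x : List α) : ∃ c, x.length ≤ R → P x c := by
    by_cases hx : x.length ≤ R
    · exact (hP x hx).imp fun _ hc _ => hc
    · exact (hP [] (Nat.zero_le R)).imp fun _ _ h => absurd h hx
  choose χ hχ using hP'
  obtain ⟨f, hf, hff⟩ := hR χ
  obtain ⟨o⟩ := ‹Nonempty α›
  obtain ⟨c, n, hn, hnc⟩ := hd fun j => χ (f (List.replicate j o))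
  obtain ⟨g, hg, hgn⟩ := exists_tree_length_eq (α := α) hn
  have hgd (t) (ht : t.length ≤ q) : (g t).length ≤ d := hgn t ht ▸ (hnc _ ht).1
  have hfg := hf.comp ⟨hg, hgd⟩
  refine ⟨f ∘ g, c, hfg, fun t ht => ?_⟩
  have hc : χ (f (g t)) = c := by
    rw [← (hnc _ ht).2]
    exact hff _ _ (by simp [hgn t ht]) (hgd t ht)
  exact hc ▸ hχ _ (hfg.length_le t ht)

section Expand

variable {β Z : Type} (ζ : Z → List β)

/-- The word over `β` encoded by a word over `Z × β`: the letter `(z, a)` stands for `ζ z ⌢ a`. -/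
def expand (X : List (Z × β)) : List β := X.flatMap fun p => ζ p.1 ++ [p.2]

lemma length_expand_le {L : ℕ} (hL : ∀ z, (ζ z).length ≤ L) (X : List (Z × β)) :
    (expand ζ X).length ≤ X.length * (L + 1) := by
  induction X with
  | nil => simp [expand]
  | cons p X ih =>
    have := hL p.1
    simp only [expand, List.flatMap_cons, List.length_append, List.length_cons,
      List.length_nil] at ih ⊢
    linarith

lemma exists_expand_fill (z : Z) (w : List (Option (Z × β))) :
    ∃ W : List (Option β), ∀ a, expand ζ (fill w (z, a)) = fill W a := by
  refine ⟨w.flatMap fun o => (ζ (o.elim z Prod.fst)).map some ++ [o.map Prod.snd], fun a => ?_⟩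
  induction w with
  | nil => rfl
  | cons o w ih =>
    simp only [expand, fill_cons, List.flatMap_cons, fill_append] at ih ⊢
    rw [ih]
    cases o <;> simp

lemma IsTree.expand_append {f : List (Z × β) → List (Z × β)} (hf : IsTree f) (z : Z) :
    IsTree fun t => expand ζ (f (t.map (z, ·))) ++ ζ z := by
  obtain ⟨w, hw⟩ := hf
  choose W hW using fun j => exists_expand_fill ζ z (w j)
  refine ⟨fun j => W j ++ (ζ z).map some, fun t a => ?_⟩
  have hcons (X Y) : expand ζ (X ++ (z, a) :: Y) = expand ζ X ++ ζ z ++ a :: expand ζ Y := by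
    simp [expand]
  simp [hw, hcons, hW]

end Expand

/-- A colour `z` may be attached to a word `x` even though the tree is required to pass through
the words `x ⌢ ζ z`: the letters of the tree provided by `exists_tree_mono` over `Z × β` already
contain the words `ζ z`. -/
lemma exists_append_tree_mono (β : Type) [Finite β] [Nonempty β] {Z : Type} [Finite Z] [Nonempty Z]
    (ζ : Z → List β) {L : ℕ} (hL : ∀ z, (ζ z).length ≤ L) (q : ℕ) :
    ∃ R : ℕ, ∀ P : List β → Z → Prop, (∀ x, x.length ≤ R → ∃ z, P x z) →
      ∃ (g : List β → List β) (z : Z), IsBoundedTree q (R + L) (fun t => g t ++ ζ z) ∧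
        ∀ t, t.length ≤ q → (g t).length ≤ R ∧ P (g t) z := by
  obtain ⟨R, hR⟩ := exists_tree_mono (Z × β) Z q
  have hlen (X : List (Z × β)) (hX : X.length ≤ R) : (expand ζ X).length ≤ R * (L + 1) :=
    (length_expand_le ζ hL X).trans (Nat.mul_le_mul_right _ hX)
  refine ⟨R * (L + 1), fun P hP => ?_⟩
  obtain ⟨f, z, hf, hfP⟩ := hR (fun X z => P (expand ζ X) z) fun X hX => hP _ (hlen X hX)
  have hg (t : List β) (ht : t.length ≤ q) :
      (expand ζ (f (t.map (z, ·)))).length ≤ R * (L + 1) :=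
    hlen _ (hf.length_le _ (by simpa using ht))
  refine ⟨fun t => expand ζ (f (t.map (z, ·))), z, ⟨hf.isTree.expand_append ζ z, fun t ht => ?_⟩,
    fun t ht => ⟨hg t ht, hfP _ (by simpa using ht)⟩⟩
  rw [List.length_append]
  exact add_le_add (hg t ht) (hL z)

end Colourings

/-! ### Finitely additive probabilities -/

/-- Finitely additive probability measures defined on all subsets. They are used instead of
measures because limits of uniform distributions along ultrafilters are only finitely additive. -/
structure ProbContent (Ω : Type*) where
  /-- The probability of an event. -/
  toFun : Set Ω → ℝ
  nonneg' : ∀ S, 0 ≤ toFun S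
  union' : ∀ S T, Disjoint S T → toFun (S ∪ T) = toFun S + toFun T
  univ' : toFun Set.univ = 1

namespace ProbContent

variable {Ω ι : Type*}

instance : CoeFun (ProbContent Ω) fun _ => Set Ω → ℝ := ⟨toFun⟩

variable (μ : ProbContent Ω)

lemma nonneg (S : Set Ω) : 0 ≤ μ S := μ.nonneg' S

lemma union {S T : Set Ω} (h : Disjoint S T) : μ (S ∪ T) = μ S + μ T := μ.union' S T h

@[simp] lemma univ : μ Set.univ = 1 := μ.univ'

@[simp] lemma empty : μ ∅ = 0 := by
  simpa using μ.union (Set.disjoint_empty (∅ : Set Ω))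

lemma inter_add_sdiff (S T : Set Ω) : μ (S ∩ T) + μ (S \ T) = μ S := by
  rw [← μ.union Set.disjoint_sdiff_inter.symm, Set.inter_union_sdiff]

lemma mono {S T : Set Ω} (h : S ⊆ T) : μ S ≤ μ T := by
  have := μ.inter_add_sdiff T S
  rw [Set.inter_eq_self_of_subset_right h] at this
  linarith [μ.nonneg (T \ S)]

lemma sdiff {S T : Set Ω} (h : T ⊆ S) : μ (S \ T) = μ S - μ T := by
  rw [← μ.inter_add_sdiff S T, Set.inter_eq_self_of_subset_right h, add_sub_cancel_left]

lemma le_one (S : Set Ω) : μ S ≤ 1 := μ.univ ▸ μ.mono S.subset_univ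

lemma union_add_inter (S T : Set Ω) : μ (S ∪ T) + μ (S ∩ T) = μ S + μ T := by
  rw [← Set.union_sdiff_self, μ.union Set.disjoint_sdiff_right, ← μ.inter_add_sdiff T S,
    Set.inter_comm]
  ring

lemma biUnion_le (s : Finset ι) (E : ι → Set Ω) : μ (⋃ i ∈ s, E i) ≤ ∑ i ∈ s, μ (E i) := by
  classical
  induction s using Finset.induction_on with
  | empty => simp
  | insert i s hi ih =>
    rw [Finset.set_biUnion_insert, Finset.sum_insert hi]
    linarith [μ.union_add_inter (E i) (⋃ i ∈ s, E i), μ.nonneg (E i ∩ ⋃ i ∈ s, E i)]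

/-- The conditional content `S ↦ μ(S ∩ U) / μ(U)`. -/
noncomputable def cond (U : Set Ω) (hU : 0 < μ U) : ProbContent Ω where
  toFun S := μ (S ∩ U) / μ U
  nonneg' S := div_nonneg (μ.nonneg _) hU.le
  union' S T h := by
    rw [Set.union_inter_distrib_right,
      μ.union (h.mono Set.inter_subset_left Set.inter_subset_left), add_div]
  univ' := by rw [Set.univ_inter, div_self hU.ne']

lemma cond_apply {U : Set Ω} (hU : 0 < μ U) (S : Set Ω) : μ.cond U hU S = μ (S ∩ U) / μ U := rfl

lemma cond_pos_iff {U : Set Ω} (hU : 0 < μ U) {S : Set Ω} : 0 < μ.cond U hU S ↔ 0 < μ (S ∩ U) :=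
  div_pos_iff_of_pos_right hU

lemma sum_sub_sum_inter_le (E : ℕ → Set Ω) (n : ℕ) :
    ∑ j ∈ Finset.range n, μ (E j) - ∑ j ∈ Finset.range n, ∑ i ∈ Finset.range j, μ (E i ∩ E j)
      ≤ μ (⋃ i ∈ Finset.range n, E i) := by
  induction n with
  | zero => simp
  | succ n ih =>
    have hunion := μ.union_add_inter (E n) (⋃ i ∈ Finset.range n, E i)
    have hinter := μ.biUnion_le (Finset.range n) fun i => E i ∩ E n
    rw [← Set.iUnion₂_inter, Set.inter_comm] at hinter
    rw [Finset.sum_range_succ, Finset.sum_range_succ, Finset.range_add_one,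
      Finset.set_biUnion_insert]
    linarith

/-- The error term `1 / (2 n²)` in Bonferroni's inequality leaves `n δ - 1 / 2 > 1`. -/
lemma exists_inter_ge {δ : ℝ} (hδ : 0 < δ) : ∃ (n : ℕ) (δ' : ℝ), 0 < δ' ∧
    ∀ {Ω : Type*} (μ : ProbContent Ω) (E : ℕ → Set Ω), (∀ i ≤ n, δ ≤ μ (E i)) →
      ∃ i j, i < j ∧ j ≤ n ∧ δ' ≤ μ (E i ∩ E j) := by
  obtain ⟨n, hn⟩ := exists_nat_gt (2 / δ)
  have hn0 : (0 : ℝ) < n := lt_trans (by positivity) hn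
  refine ⟨n, 1 / (2 * n ^ 2), by positivity, fun μ E hE => ?_⟩
  by_contra! hlt
  have hsum : n * δ ≤ ∑ j ∈ Finset.range n, μ (E j) := by
    simpa using Finset.card_nsmul_le_sum (Finset.range n) (fun j => μ (E j)) δ
      fun j hj => hE j (Finset.mem_range.1 hj).le
  have hinter : ∑ j ∈ Finset.range n, ∑ i ∈ Finset.range j, μ (E i ∩ E j)
      ≤ ∑ j ∈ Finset.range n, ∑ i ∈ Finset.range n, 1 / (2 * (n : ℝ) ^ 2) := by
    refine Finset.sum_le_sum fun j hj => ?_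
    have hj := Finset.mem_range.1 hj
    calc ∑ i ∈ Finset.range j, μ (E i ∩ E j)
        ≤ ∑ i ∈ Finset.range j, 1 / (2 * (n : ℝ) ^ 2) :=
          Finset.sum_le_sum fun i hi => (hlt i j (Finset.mem_range.1 hi) hj.le).le
      _ ≤ _ := Finset.sum_le_sum_of_subset_of_nonneg (Finset.range_subset_range.2 hj.le)
          fun _ _ _ => by positivity
  have hhalf : ∑ j ∈ Finset.range n, ∑ i ∈ Finset.range n, 1 / (2 * (n : ℝ) ^ 2) = 1 / 2 := by
    simp only [Finset.sum_const, Finset.card_range, nsmul_eq_mul]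
    field_simp
  linarith [μ.sum_sub_sum_inter_le E n, μ.le_one (⋃ i ∈ Finset.range n, E i), (div_lt_iff₀ hδ).1 hn]

/-- `μ(E ∩ S) - l μ(S)`, by how much `E` exceeds the density `l` inside `S`. -/
def excess (l : ℝ) (E S : Set Ω) : ℝ := μ (E ∩ S) - l * μ S

variable {l : ℝ}

lemma excess_inter_add_sdiff (E S T : Set Ω) :
    μ.excess l E (S ∩ T) + μ.excess l E (S \ T) = μ.excess l E S := by
  have hE := μ.inter_add_sdiff (E ∩ S) T
  rw [Set.inter_assoc, Set.inter_sdiff_assoc] at hE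
  simp only [excess, ← hE, ← μ.inter_add_sdiff S T]
  ring

lemma excess_sdiff_inter {S T : Set Ω} (h : T ⊆ S) (E V : Set Ω) :
    μ.excess l E ((S \ T) ∩ V) = μ.excess l E (S ∩ V) - μ.excess l E (T ∩ V) := by
  rw [← μ.excess_inter_add_sdiff E (S ∩ V) T, Set.inter_right_comm,
    Set.inter_eq_self_of_subset_right h, add_sub_cancel_left, Set.inter_sdiff_right_comm]

lemma excess_le (hl : 0 ≤ l) (E S : Set Ω) : μ.excess l E S ≤ μ S := by
  have := mul_nonneg hl (μ.nonneg S)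
  have := μ.mono (Set.inter_subset_right : E ∩ S ⊆ S)
  simp only [excess]
  linarith

lemma le_of_add_mul_le_excess_inter {E S T : Set Ω} {κ : ℝ} (hκ : 0 ≤ κ) (hl : 0 ≤ l)
    (h : κ + κ * μ S ≤ μ.excess l E (S ∩ T)) : κ ≤ μ S := by
  have := mul_nonneg hκ (μ.nonneg S)
  linarith [μ.excess_le hl E (S ∩ T), μ.mono (Set.inter_subset_left : S ∩ T ⊆ S)]

lemma excess_add_lt_excess_univ {E X : Set Ω} {γ θ : ℝ} (hE : l - γ ≤ μ E) (hX : θ ≤ μ X)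
    (hEX : μ (E ∩ X) ≤ 0) (hl : 0 ≤ l) (hγ : 2 * γ < l * θ) :
    μ.excess l E X + γ < μ.excess l E Set.univ := by
  have := mul_le_mul_of_nonneg_left hX hl
  simp only [excess, Set.inter_univ, μ.univ]
  linarith

lemma excess_cond {U : Set Ω} (hU : 0 < μ U) (E S : Set Ω) :
    (μ.cond U hU).excess l E S = μ.excess l E (S ∩ U) / μ U := by
  simp only [excess, cond_apply, Set.inter_assoc]
  ring

open Filter Topology

lemma tendsto_limUnder (U : Ultrafilter ι) (μ : ι → ProbContent Ω) (S : Set Ω) :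
    Tendsto (fun i => μ i S) U (𝓝 (limUnder U fun i => μ i S)) := by
  obtain ⟨x, -, hx⟩ := isCompact_Icc.ultrafilter_le_nhds (U.map fun i => μ i S)
    (le_principal_iff.2 (mem_map.2 (univ_mem' fun i => ⟨(μ i).nonneg S, (μ i).le_one S⟩)))
  exact tendsto_nhds_limUnder ⟨x, hx⟩

/-- The limit of contents along an ultrafilter. -/
noncomputable def lim (U : Ultrafilter ι) (μ : ι → ProbContent Ω) : ProbContent Ω where
  toFun S := limUnder U fun i => μ i S
  nonneg' S := ge_of_tendsto' (tendsto_limUnder U μ S) fun i => (μ i).nonneg S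
  union' S T h := tendsto_nhds_unique (tendsto_limUnder U μ _) <| by
    simpa only [(μ _).union h] using (tendsto_limUnder U μ S).add (tendsto_limUnder U μ T)
  univ' := tendsto_nhds_unique (tendsto_limUnder U μ _) (by simp)

lemma tendsto_lim (U : Ultrafilter ι) (μ : ι → ProbContent Ω) (S : Set Ω) :
    Tendsto (fun i => μ i S) U (𝓝 (lim U μ S)) := tendsto_limUnder U μ S

end ProbContent

/-! ### The density Hales–Jewett theorem -/

section Rightpad

variable {α : Type*} {o : α} {x : List α} {M : ℕ}

lemma append_singleton_prefix_rightpad_append (hx : x.length ≤ M) (z : List α) :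
    x ++ [o] <+: x.rightpad (M + 1) o ++ z := by
  refine ⟨List.replicate (M - x.length) o ++ z, ?_⟩
  rw [List.rightpad, Nat.succ_sub hx, List.replicate_succ]
  simp

lemma append_singleton_prefix_replicate (o : α) {i j : ℕ} (h : i < j) :
    List.replicate i o ++ [o] <+: List.replicate j o := by
  rw [← List.replicate_succ']
  exact ⟨List.replicate (j - (i + 1)) o, by simp; omega⟩

lemma rightpad_append_cons (c w : List α) (a o : α) (M : ℕ) :
    (c ++ a :: w).rightpad (M + 1) o = c ++ a :: w.rightpad (M - c.length) o := by
  have : M + 1 - (c.length + (w.length + 1)) = M - c.length - w.length := by omega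
  simp [List.rightpad, this]

lemma fill_rightpad (w : List (Option α)) (n : ℕ) (o : Option α) (a : α) :
    fill (w.rightpad n o) a = (fill w a).rightpad n (o.getD a) := by
  simp [fill, List.rightpad]

lemma length_rightpad_sub {c : List α} {w : List (Option α)} (h : c.length + 1 + w.length ≤ M)
    (o : Option α) : c.length + 1 + (w.rightpad (M - c.length) o).length = M + 1 := by
  simp only [List.rightpad, List.length_append, List.length_replicate]
  omega

lemma IsTree.append_singleton_prefix_apply {f : List α → List α} (hf : IsTree f) {a : α}
    {y : List α} (h : x ++ [a] <+: y) : f x ++ [a] <+: f y := by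
  obtain ⟨z, rfl⟩ := h
  obtain ⟨W, hW⟩ := hf.exists_append_cons (z.map some) x.length
  refine ⟨fill W a, ?_⟩
  have := hW x rfl a
  rw [fill_map_some] at this
  simp [this]

end Rightpad

/-- Words of length at most `n`. -/
abbrev BoundedWord (α : Type*) (n : ℕ) := {x : List α // x.length ≤ n}

instance (α : Type*) [Finite α] (n : ℕ) : Finite (BoundedWord α n) :=
  (List.finite_length_le α n).to_subtype

instance (α : Type*) (n : ℕ) : Nonempty (BoundedWord α n) := ⟨⟨[], Nat.zero_le n⟩⟩

/-- The event that the family `E` contains the combinatorial line `{c} ∪ {c ⌢ a ⌢ w(a) : a}`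
together with its root. -/
def lineEvent {α Ω : Type*} (E : List α → Set Ω) (c : List α) (w : List (Option α)) : Set Ω :=
  E c ∩ ⋂ a, E (c ++ a :: fill w a)

/-- The event that the family `E` contains the first `d` levels of the tree `f`. -/
def treeEvent {α Ω : Type*} (E : List α → Set Ω) (d : ℕ) (f : List α → List α) : Set Ω :=
  {ω | ∀ t, t.length ≤ d → ω ∈ E (f t)}

/-- Families of events of probability at least `δ` indexed by the words over `α` contain a line
with positive probability. -/
def HasLines (α : Type) (δ : ℝ) : Prop :=
  ∃ R : ℕ, ∀ {Ω : Type} (μ : ProbContent Ω) (E : List α → Set Ω),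
    (∀ x, x.length ≤ R → δ ≤ μ (E x)) →
      ∃ c w, c.length + 1 + w.length ≤ R ∧ 0 < μ (lineEvent E c w)

/-- `HasLines` with a lower bound for the probability of the line. -/
def HasDenseLines (α : Type) (δ : ℝ) : Prop :=
  ∃ (R : ℕ) (θ : ℝ), 0 < θ ∧ ∀ {Ω : Type} (μ : ProbContent Ω) (E : List α → Set Ω),
    (∀ x, x.length ≤ R → δ ≤ μ (E x)) →
      ∃ c w, c.length + 1 + w.length ≤ R ∧ θ ≤ μ (lineEvent E c w)

/-- Families of events of probability bounded below indexed by the words over `α` contain a tree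
of height `d` with probability bounded below. -/
def HasDenseTrees (α : Type) (d : ℕ) : Prop :=
  ∀ δ : ℝ, 0 < δ → ∃ (R : ℕ) (θ : ℝ), 0 < θ ∧
    ∀ {Ω : Type} (μ : ProbContent Ω) (E : List α → Set Ω),
      (∀ x, x.length ≤ R → δ ≤ μ (E x)) →
        ∃ f, IsBoundedTree d R f ∧ θ ≤ μ (treeEvent E d f)

lemma HasLines.hasDenseLines {α : Type} [Finite α] {δ : ℝ} (hδ : 0 < δ)
    (h : HasLines α (δ / 2)) : HasDenseLines α δ := by
  obtain ⟨R, hR⟩ := h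
  have hfin : {p : List α × List (Option α) | p.1.length + 1 + p.2.length ≤ R}.Finite :=
    ((List.finite_length_le α R).prod (List.finite_length_le (Option α) R)).subset
      fun p (hp : _ ≤ R) => ⟨show _ ≤ R by omega, show _ ≤ R by omega⟩
  set s := hfin.toFinset with hs
  refine ⟨R, δ / (2 * (s.card + 1)), by positivity, fun μ E hE => ?_⟩
  by_contra! hlt
  set B := ⋃ p ∈ s, lineEvent E p.1 p.2 with hB
  have hμB : μ B ≤ δ / 2 := calc
    μ B ≤ s.card • (δ / (2 * (s.card + 1))) := (μ.biUnion_le _ _).trans <|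
      Finset.sum_le_card_nsmul _ _ _ fun p hp => (hlt p.1 p.2 (hfin.mem_toFinset.1 hp)).le
    _ ≤ (s.card + 1) * (δ / (2 * (s.card + 1))) := by
      rw [nsmul_eq_mul]
      gcongr
      linarith
    _ = δ / 2 := by field_simp
  obtain ⟨c, w, hcw, hpos⟩ := hR μ (fun x => E x \ B) fun x hx => by
    linarith [hE x hx, μ.inter_add_sdiff (E x) B, μ.mono (Set.inter_subset_right : E x ∩ B ⊆ B)]
  have hempty : lineEvent (fun x => E x \ B) c w = ∅ := by
    refine Set.eq_empty_of_forall_notMem fun ω hω => hω.1.2 ?_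
    refine Set.mem_biUnion (hfin.mem_toFinset.2 hcw : (c, w) ∈ s) ⟨hω.1.1, ?_⟩
    exact Set.mem_iInter.2 fun a => (Set.mem_iInter.1 hω.2 a).1
  simp [hempty] at hpos

lemma exists_tree_pair_mono {α κ : Type} [Finite α] [Finite κ] (o : α) (q : ℕ) : ∃ R : ℕ,
    ∀ χ : List α → List α → κ, ∃ f, IsBoundedTree q R f ∧
      ∀ x y y', x ++ [o] <+: y → x ++ [o] <+: y' → y.length ≤ q → y'.length ≤ q →
        χ (f x) (f y) = χ (f x) (f y') := by
  have : Nonempty α := ⟨o⟩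
  induction q generalizing κ with
  | zero =>
    refine ⟨0, fun χ => ⟨id, isBoundedTree_id 0, fun x y y' hy _ hlen _ => ?_⟩⟩
    have := hy.length_le
    simp only [List.length_append, List.length_singleton] at this
    omega
  | succ q ih =>
    obtain ⟨R', hR'⟩ := ih (κ := α → κ)
    obtain ⟨R, hR⟩ := exists_tree_mono α κ R'
    refine ⟨1 + R, fun χ => ?_⟩
    obtain ⟨g, c, hg, hgc⟩ := hR (fun y c => χ [] (o :: y) = c) fun y _ => ⟨_, rfl⟩
    obtain ⟨f, hf, hff⟩ := hR' fun x y a => χ (a :: g x) (a :: g y)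
    refine ⟨treeCons [] [] (g ∘ f), by simpa using (hg.comp hf).treeCons [] [], ?_⟩
    rintro (_ | ⟨a, x⟩) (_ | ⟨b, y⟩) (_ | ⟨b', y'⟩) hy hy' hlen hlen' <;>
      simp only [List.nil_append, List.cons_append, List.cons_prefix_cons, List.prefix_nil,
        List.length_cons, Nat.add_le_add_iff_right, reduceCtorEq] at hy hy' hlen hlen'
    · rw [← hy.1, ← hy'.1]
      exact (hgc _ (hf.length_le y hlen)).trans (hgc _ (hf.length_le y' hlen')).symm
    · rw [← hy.1, ← hy'.1]
      exact congrFun (hff x y y' hy.2 hy'.2 hlen hlen') a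

lemma exists_tree_inter_ge {α : Type} [Finite α] (o : α) {δ : ℝ} (hδ : 0 < δ) :
    ∃ δ' : ℝ, 0 < δ' ∧ ∀ q : ℕ, ∃ R : ℕ, ∀ {Ω : Type} (μ : ProbContent Ω) (E : List α → Set Ω),
      (∀ x, x.length ≤ R → δ ≤ μ (E x)) → ∃ f, IsBoundedTree q R f ∧
        ∀ x y, x ++ [o] <+: y → y.length ≤ q → δ' ≤ μ (E (f x) ∩ E (f y)) := by
  have : Nonempty α := ⟨o⟩
  obtain ⟨n, δ', hδ', hn⟩ := ProbContent.exists_inter_ge hδ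
  refine ⟨δ', hδ', fun q => ?_⟩
  obtain ⟨R', hR'⟩ := exists_tree_mono α Prop (max q n)
  obtain ⟨R, hR⟩ := exists_tree_pair_mono (κ := Prop) o (R' + 1)
  refine ⟨R, fun μ E hE => ?_⟩
  obtain ⟨f, hf, hff⟩ := hR fun x y => δ' ≤ μ (E x ∩ E y)
  obtain ⟨g, b, hg, hgb⟩ := hR' (fun x b => (δ' ≤ μ (E (f x) ∩ E (f (x ++ [o])))) = b)
    fun x _ => ⟨_, rfl⟩
  have hfg := (hf.mono (Nat.le_succ R') le_rfl).comp hg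
  have hconst (x y : List α) (hxy : x ++ [o] <+: y) (hy : y.length ≤ max q n) :
      (δ' ≤ μ (E (f (g x)) ∩ E (f (g y)))) = b := by
    have hx : x.length ≤ max q n := by
      have := hxy.length_le
      simp only [List.length_append, List.length_singleton] at this
      omega
    rw [hff (g x) (g y) (g x ++ [o]) (hg.isTree.append_singleton_prefix_apply hxy) List.prefix_rfl
      ((hg.length_le y hy).trans (Nat.le_succ _)) (by simpa using hg.length_le x hx)]
    exact hgb x hx
  obtain ⟨i, j, hij, hj, hδij⟩ := hn μ (fun i => E (f (g (List.replicate i o))))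
    fun i hi => hE _ (hfg.length_le _ (by simpa using Or.inr hi))
  have hb : b := (hconst _ _ (append_singleton_prefix_replicate o hij)
    (by simpa using Or.inr hj)) ▸ hδij
  refine ⟨f ∘ g, hfg.mono (le_max_left _ _) le_rfl, fun x y hxy hy => ?_⟩
  rwa [Function.comp_apply, Function.comp_apply, hconst x y hxy (hy.trans (le_max_left _ _))]

lemma hasDenseTrees_zero (α : Type) : HasDenseTrees α 0 := by
  refine fun δ hδ => ⟨0, δ, hδ, fun μ E hE => ⟨id, isBoundedTree_id 0,
    (hE [] le_rfl).trans (μ.mono fun ω hω t ht => ?_)⟩⟩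
  rwa [List.length_eq_zero_iff.1 (Nat.le_zero.1 ht)]

lemma HasDenseTrees.succ {α : Type} [Finite α] [Nonempty α]
    (hlines : ∀ δ : ℝ, 0 < δ → HasDenseLines α δ) {d : ℕ} (hd : HasDenseTrees α d) :
    HasDenseTrees α (d + 1) := by
  obtain ⟨o⟩ := ‹Nonempty α›
  intro δ hδ
  obtain ⟨δ', hδ', hpairs⟩ := exists_tree_inter_ge o hδ
  obtain ⟨M, θ', hθ', hM⟩ := hlines δ' hδ'
  obtain ⟨R₂, θ, hθ, hR₂⟩ := hd θ' hθ'
  obtain ⟨R₁, hR₁⟩ := exists_tree_mono α (BoundedWord α M × BoundedWord (Option α) M) R₂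
  obtain ⟨R, hR⟩ := hpairs (M + 1 + R₁)
  refine ⟨R, θ, hθ, fun μ E hE => ?_⟩
  obtain ⟨f, hf, hff⟩ := hR μ E hE
  let G (z x : List α) := E (f x) ∩ E (f (x.rightpad (M + 1) o ++ z))
  have hG (z : List α) (hz : z.length ≤ R₁) : ∃ p : BoundedWord α M × BoundedWord (Option α) M,
      p.1.1.length + 1 + p.2.1.length ≤ M ∧ θ' ≤ μ (lineEvent (G z) p.1 p.2) := by
    obtain ⟨c, w, hcw, hθcw⟩ := hM μ (G z) fun x hx =>
      hff x _ (append_singleton_prefix_rightpad_append hx z) (by simp; omega)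
    exact ⟨(⟨c, by omega⟩, ⟨w, by omega⟩), hcw, hθcw⟩
  obtain ⟨g, ⟨⟨c, _⟩, ⟨w, _⟩⟩, hg, hgG⟩ := hR₁ _ hG
  have hcw := (hgG [] (Nat.zero_le _)).1
  obtain ⟨h, hh, hhθ⟩ := hR₂ μ (fun z => lineEvent (G (g z)) c w) fun z hz => (hgG z hz).2
  have hH := (hg.comp hh).treeCons c (w.rightpad (M - c.length) (some o))
  rw [length_rightpad_sub hcw] at hH
  refine ⟨_, hf.comp hH, hhθ.trans (μ.mono fun ω hω t ht => ?_)⟩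
  cases t with
  | nil => exact (hω [] (Nat.zero_le _)).1.1
  | cons a t =>
    have := (Set.mem_iInter.1 (hω t (by simpa using ht)).2 a).2
    rwa [rightpad_append_cons, ← Option.getD_some (a := o), ← fill_rightpad] at this

lemma hasDenseTrees {α : Type} [Finite α] [Nonempty α] (h : ∀ δ : ℝ, 0 < δ → HasLines α δ)
    (d : ℕ) : HasDenseTrees α d := by
  induction d with
  | zero => exact hasDenseTrees_zero α
  | succ d ih => exact ih.succ fun δ hδ => (h _ (half_pos hδ)).hasDenseLines hδ

section Insensitive

variable {α Ω : Type} {a : α} {X Y : List (Option α) → Set Ω}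

/-- A family of events indexed by the variable words over `α` is insensitive if it does not
distinguish the variable from the letter `a`. -/
def IsInsensitive (a : α) (X : List (Option α) → Set Ω) : Prop :=
  ∀ s s', fill s a = fill s' a → X s = X s'

lemma IsInsensitive.comp_isTree (hX : IsInsensitive a X)
    {f : List (Option α) → List (Option α)} (hf : IsTree f) :
    IsInsensitive a fun s => X (f s) :=
  fun _ _ h => hX _ _ (hf.map_congr _ h)

lemma IsInsensitive.append_left (hX : IsInsensitive a X) (x : List (Option α)) :
    IsInsensitive a fun s => X (x ++ s) :=
  hX.comp_isTree (isTree_id.append_left x)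

lemma IsInsensitive.sdiff (hX : IsInsensitive a X) (hY : IsInsensitive a Y) :
    IsInsensitive a fun s => X s \ Y s :=
  fun s s' h => by simp only [hX s s' h, hY s s' h]

lemma IsInsensitive.compl (hX : IsInsensitive a X) : IsInsensitive a fun s => (X s)ᶜ :=
  fun s s' h => by simp only [hX s s' h]

lemma HasDenseTrees.exists_of_isInsensitive {d : ℕ} (hd : HasDenseTrees α d) (a : α) {κ : ℝ}
    (hκ : 0 < κ) : ∃ (M : ℕ) (θ : ℝ), 0 < θ ∧
      ∀ {Ω : Type} (μ : ProbContent Ω) (X : List (Option α) → Set Ω), IsInsensitive a X →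
        (∀ s, s.length ≤ M → κ ≤ μ (X s)) →
          ∃ V, IsBoundedTree d M V ∧ θ ≤ μ (treeEvent X d V) := by
  have : Nonempty α := ⟨a⟩
  obtain ⟨M, θ, hθ, hM⟩ := hd κ hκ
  refine ⟨M, θ, hθ, fun μ X hX hμ => ?_⟩
  obtain ⟨f, hf, hfθ⟩ := hM μ (fun t => X (t.map some)) fun t ht => hμ _ (by simpa using ht)
  obtain ⟨F, hF, hFf⟩ := hf.exists_map_eq_map some
  refine ⟨F, hF, hfθ.trans (μ.mono fun ω hω s hs => ?_)⟩
  have hXs : X (F s) = X ((f (fill s a)).map some) := by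
    rw [← hFf]
    exact hX.comp_isTree hF.isTree _ _ (by simp)
  rw [hXs]
  exact hω _ (by simpa using hs)

/-- The event of a tree `V` above `x` is insensitive in `x` as soon as `V` is fixed. To fix `V` and
the node where `Q` holds, they are used as colours of `x`. -/
lemma HasDenseTrees.exists_tiling [Finite α] {d : ℕ} (hd : HasDenseTrees α d) (a : α) {κ : ℝ}
    (hκ : 0 < κ) : ∃ (M : ℕ) (θ : ℝ), 0 < θ ∧ ∀ q : ℕ, ∃ N : ℕ,
      ∀ {Ω : Type} (μ : ProbContent Ω) (A : List (Option α) → Set Ω), IsInsensitive a A →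
        (∀ s, s.length ≤ N + M → κ ≤ μ (A s)) → ∀ Q : List (Option α) → Set Ω → Prop,
        (∀ x V, x.length ≤ N → IsBoundedTree d M V →
          θ ≤ μ (treeEvent (fun t => A (x ++ t)) d V) →
            ∃ t, t.length ≤ d ∧ Q (x ++ V t) (treeEvent (fun t => A (x ++ t)) d V)) →
        ∃ h O, IsBoundedTree q (N + M) h ∧ IsInsensitive a O ∧
          ∀ s, s.length ≤ q → O s ⊆ A (h s) ∧ θ ≤ μ (O s) ∧ Q (h s) (O s) := by
  obtain ⟨M, θ, hθ, hM⟩ := hd.exists_of_isInsensitive a hκ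
  refine ⟨M, θ, hθ, fun q => ?_⟩
  obtain ⟨N, hN⟩ := exists_append_tree_mono (Option α)
    (fun z : (BoundedWord (Option α) d → BoundedWord (Option α) M) × BoundedWord (Option α) d =>
      (z.1 z.2).1) (fun z => (z.1 z.2).2) q
  refine ⟨N, fun {Ω} μ A hA hμ Q hQ => ?_⟩
  let T (x : List (Option α)) (V : BoundedWord (Option α) d → BoundedWord (Option α) M) : Set Ω :=
    {ω | ∀ t, ω ∈ A (x ++ (V t).1)}
  obtain ⟨g, ⟨V, t₀⟩, hg, hgQ⟩ := hN (fun x z => θ ≤ μ (T x z.1) ∧ Q (x ++ (z.1 z.2).1) (T x z.1))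
    fun x hx => by
      obtain ⟨V, hV, hVθ⟩ := hM μ _ (hA.append_left x) fun s hs => hμ _ (by simp; omega)
      obtain ⟨t, ht, htQ⟩ := hQ x V hx hV hVθ
      have hT : T x (fun t => ⟨V t.1, hV.length_le _ t.2⟩) = treeEvent (fun t => A (x ++ t)) d V :=
        Set.ext fun ω => Subtype.forall
      exact ⟨(fun t => ⟨V t.1, hV.length_le _ t.2⟩, ⟨t, ht⟩), by simpa only [hT] using ⟨hVθ, htQ⟩⟩
  refine ⟨_, fun s => T (g s) V, hg, fun s s' hs => ?_,
    fun s hs => ⟨fun ω hω => hω t₀, (hgQ s hs).2⟩⟩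
  have hgs : fill (g s) a = fill (g s') a :=
    List.append_cancel_right (bs := fill (V t₀).1 a) <| by
      simpa only [fill, List.map_append] using hg.isTree.map_congr (·.getD a) hs
  refine Set.ext fun ω => forall_congr' fun t => ?_
  rw [hA (g s ++ (V t).1) (g s' ++ (V t).1) (by simp only [fill_append, hgs])]

end Insensitive

section DenseOnSubtree

variable {α Ω : Type} {μ : ProbContent Ω} {l : ℝ} {E : List α → Set Ω} {d q R : ℕ}

/-- After conditioning on a suitable event, the events of `E` along some tree of height `d` with
words of length at most `R` have probability at least `l`. -/
def DenseOnSubtree (μ : ProbContent Ω) (l : ℝ) (E : List α → Set Ω) (d R : ℕ) : Prop :=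
  ∃ (f : List α → List α) (U : Set Ω) (hU : 0 < μ U), IsBoundedTree d R f ∧
    ∀ t, t.length ≤ d → l ≤ μ.cond U hU (E (f t))

lemma DenseOnSubtree.of_comp {g : List α → List α} (hg : IsBoundedTree q R g)
    (h : DenseOnSubtree μ l (fun t => E (g t)) d q) : DenseOnSubtree μ l E d R := by
  obtain ⟨f, U, hU, hf, hfl⟩ := h
  exact ⟨g ∘ f, U, hU, hg.comp hf, hfl⟩

lemma DenseOnSubtree.of_cond {V : Set Ω} {hV : 0 < μ V}
    (h : DenseOnSubtree (μ.cond V hV) l E d R) : DenseOnSubtree μ l E d R := by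
  obtain ⟨f, U, hU, hf, hfl⟩ := h
  refine ⟨f, U ∩ V, (μ.cond_pos_iff hV).1 hU, hf, fun t ht => (hfl t ht).trans_eq ?_⟩
  simp only [ProbContent.cond_apply, Set.inter_assoc]
  exact div_div_div_cancel_right₀ hV.ne' _ _

/-- Excess of `E` over the density `l` inside intersections of `b`-insensitive sets, `b ∈ J`, can
be turned into density at least `l` along a tree. -/
def HasDenseSubtrees (J : Finset α) : Prop :=
  ∀ (d : ℕ) (κ l : ℝ), 0 < κ → 0 ≤ l → ∃ R : ℕ,
    ∀ {Ω : Type} (μ : ProbContent Ω) (E : List (Option α) → Set Ω)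
      (X : α → List (Option α) → Set Ω), (∀ b ∈ J, IsInsensitive b (X b)) →
      (∀ s, s.length ≤ R → κ ≤ μ.excess l (E s) (⋂ b ∈ J, X b s)) → DenseOnSubtree μ l E d R

lemma hasDenseSubtrees_empty (α : Type) : HasDenseSubtrees (∅ : Finset α) := by
  refine fun d κ l hκ _ => ⟨d, fun μ E X _ hE => ?_⟩
  refine ⟨id, Set.univ, by simp, isBoundedTree_id d, fun t ht => ?_⟩
  have := hE t ht
  simp only [ProbContent.excess, Finset.notMem_empty, Set.iInter_of_empty, Set.iInter_univ,
    Set.inter_univ, ProbContent.univ, ProbContent.cond_apply, mul_one, div_one, id_eq] at this ⊢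
  linarith

/-- The induction is on the number of times an insensitive event of probability at least `θ` can
be removed from `A`: either `E` has excess on all nodes of some tree of `A`, and we restrict to the
event of this tree, or some node without excess on each such tree can be removed from `A`. -/
lemma HasDenseSubtrees.exists_of_le_mul [Finite α] {J : Finset α} (hJ : HasDenseSubtrees J)
    (htrees : ∀ d, HasDenseTrees α d) (a : α) (d : ℕ) {κ l : ℝ} (hκ : 0 < κ) (hl : 0 ≤ l) :
    ∃ θ : ℝ, 0 < θ ∧ ∀ n : ℕ, ∃ R : ℕ,
      ∀ {Ω : Type} (μ : ProbContent Ω) (E A : List (Option α) → Set Ω)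
        (X : α → List (Option α) → Set Ω), IsInsensitive a A → (∀ b ∈ J, IsInsensitive b (X b)) →
        (∀ s, s.length ≤ R → κ + κ * μ (A s) ≤ μ.excess l (E s) (A s ∩ ⋂ b ∈ J, X b s)) →
        (∀ s, s.length ≤ R → μ (A s) ≤ n * θ) → DenseOnSubtree μ l E d R := by
  obtain ⟨d', hd'⟩ := hJ d κ l hκ hl
  obtain ⟨M, θ, hθ, hM⟩ := (htrees d').exists_tiling a hκ
  refine ⟨θ, hθ, fun n => ?_⟩
  induction n with
  | zero =>
    refine ⟨0, fun μ E A X _ _ hE hA => ?_⟩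
    have := μ.le_of_add_mul_le_excess_inter hκ.le hl (hE [] le_rfl)
    have := hA [] le_rfl
    norm_num at this
    linarith
  | succ n ih =>
    obtain ⟨q, hq⟩ := ih
    obtain ⟨N, hN⟩ := hM q
    refine ⟨N + M, fun μ E A X hA hX hE hn => ?_⟩
    by_contra hdense
    obtain ⟨h, O, hh, hO, hhO⟩ := hN μ A hA
      (fun s hs => μ.le_of_add_mul_le_excess_inter hκ.le hl (hE s hs))
      (fun x O => μ.excess l (E x) (O ∩ ⋂ b ∈ J, X b x) < κ * μ O) fun x V hx hV hVθ => by
        by_contra! hlt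
        have hO := hθ.trans_le hVθ
        have := hd' (μ.cond _ hO) (fun t => E (x ++ V t)) (fun b t => X b (x ++ V t))
          (fun b hb => ((hX b hb).append_left x).comp_isTree hV.isTree) fun t ht => by
            rw [ProbContent.excess_cond, le_div_iff₀ hO, Set.inter_comm]
            exact hlt t ht
        exact hdense (.of_comp ((hV.append_left x).mono le_rfl (by omega)) this.of_cond)
    refine hdense (.of_comp hh <| hq μ (fun s => E (h s)) (fun s => A (h s) \ O s)
      (fun b s => X b (h s)) ((hA.comp_isTree hh.isTree).sdiff hO)
      (fun b hb => (hX b hb).comp_isTree hh.isTree) (fun s hs => ?_) fun s hs => ?_)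
    · obtain ⟨hOA, -, hlt⟩ := hhO s hs
      have := hE (h s) (hh.length_le s hs)
      rw [μ.excess_sdiff_inter hOA, μ.sdiff hOA]
      linarith
    · have := hn (h s) (hh.length_le s hs)
      push_cast at this
      rw [μ.sdiff (hhO s hs).1]
      linarith [(hhO s hs).2.1]

lemma HasDenseSubtrees.insert [Finite α] [DecidableEq α] {J : Finset α} (hJ : HasDenseSubtrees J)
    (htrees : ∀ d, HasDenseTrees α d) (a : α) : HasDenseSubtrees (insert a J) := by
  intro d κ l hκ hl
  obtain ⟨θ, hθ, hn⟩ := hJ.exists_of_le_mul htrees a d (half_pos hκ) hl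
  obtain ⟨n, hnθ⟩ := exists_nat_gt (1 / θ)
  obtain ⟨R, hR⟩ := hn n
  refine ⟨R, fun μ E X hX hE => ?_⟩
  rw [Finset.forall_mem_insert] at hX
  refine hR μ E (X a) X hX.1 hX.2 (fun s hs => ?_) fun s _ => ?_
  · rw [← Finset.set_biInter_insert a J fun b => X b s]
    have := mul_le_mul_of_nonneg_left (μ.le_one (X a s)) (half_pos hκ).le
    linarith [hE s hs]
  · exact (μ.le_one _).trans ((div_lt_iff₀ hθ).1 hnθ).le

lemma hasDenseSubtrees [Finite α] (htrees : ∀ d, HasDenseTrees α d) (J : Finset α) :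
    HasDenseSubtrees J := by
  classical
  induction J using Finset.induction_on with
  | empty => exact hasDenseSubtrees_empty α
  | insert a J _ ih => exact ih.insert htrees a

end DenseOnSubtree

section Increment

variable {α : Type}

lemma ProbContent.exists_le_excess_biInter_sdiff {Ω : Type*} [Fintype α] (μ : ProbContent Ω)
    {E : Set Ω} {X : α → Set Ω} {l κ : ℝ}
    (h : μ.excess l E (⋂ b, X b) + Fintype.card α * κ < μ.excess l E Set.univ) :
    ∃ (J : Finset α) (j : α), j ∉ J ∧ κ ≤ μ.excess l E ((⋂ b ∈ J, X b) \ X j) := by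
  classical
  by_contra! hlt
  have hle (J : Finset α) :
      μ.excess l E Set.univ ≤ μ.excess l E (⋂ b ∈ J, X b) + J.card * κ := by
    induction J using Finset.induction_on with
    | empty => simp
    | insert j J hj ih =>
      rw [Finset.set_biInter_insert, Set.inter_comm, Finset.card_insert_of_notMem hj]
      push_cast
      linarith [hlt J j hj, μ.excess_inter_add_sdiff (l := l) E (⋂ b ∈ J, X b) (X j)]
  have := hle Finset.univ
  simp only [Finset.mem_univ, Set.iInter_true, Finset.card_univ] at this
  linarith

lemma IsBoundedTree.exists_lineEvent_eq [Nonempty α] {Ω : Type*} {d R : ℕ}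
    {f : List α → List α} (hf : IsBoundedTree d R f) (E : List α → Set Ω) {c : List α}
    {w : List (Option α)} (h : c.length + 1 + w.length ≤ d) :
    ∃ c' w', c'.length + 1 + w'.length ≤ R ∧
      lineEvent (fun t => E (f t)) c w = lineEvent E c' w' := by
  obtain ⟨W, hWR, hW⟩ := hf.exists_append_cons c w h
  exact ⟨f c, W, hWR, by simp only [lineEvent, hW]⟩

lemma HasLines.exists_of_le_excess [Finite α] {l : ℝ} (h : HasLines (Option α) l) (hl : 0 ≤ l)
    (htrees : ∀ d, HasDenseTrees α d) {κ : ℝ} (hκ : 0 < κ) : ∃ R : ℕ,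
      ∀ {Ω : Type} (μ : ProbContent Ω) (E : List (Option α) → Set Ω)
        (X : α → List (Option α) → Set Ω), (∀ b, IsInsensitive b (X b)) →
        (∀ s, s.length ≤ R → ∃ (J : Finset α) (j : α), j ∉ J ∧
          κ ≤ μ.excess l (E s) ((⋂ b ∈ J, X b s) \ X j s)) →
        ∃ c w, c.length + 1 + w.length ≤ R ∧ 0 < μ (lineEvent E c w) := by
  classical
  have := Fintype.ofFinite α
  obtain ⟨d, hd⟩ := h
  choose r hr using fun J => hasDenseSubtrees htrees J d κ l hκ hl
  obtain ⟨R, hR⟩ := exists_tree_mono (Option α) (Finset α × α) (Finset.univ.sup r)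
  refine ⟨R, fun μ E X hX hE => ?_⟩
  obtain ⟨h, ⟨J, j⟩, hh, hhJ⟩ := hR (fun s p => p.2 ∉ p.1 ∧
    κ ≤ μ.excess l (E s) ((⋂ b ∈ p.1, X b s) \ X p.2 s)) (by simpa using hE)
  have hj : j ∉ J := (hhJ [] (Nat.zero_le _)).1
  let Y (s : List (Option α)) : α → Set _ :=
    Function.update (fun b => X b (h s)) j (X j (h s))ᶜ
  have hY (s : List (Option α)) : ⋂ b ∈ insert j J, Y s b = (⋂ b ∈ J, X b (h s)) \ X j (h s) := by
    rw [Finset.set_biInter_insert_update _ hj, Set.inter_comm, Set.sdiff_eq]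
  have hdense : DenseOnSubtree μ l (fun s => E (h s)) d (r (insert j J)) := by
    refine hr (insert j J) μ _ (fun b s => Y s b) (fun b _ => ?_) fun s hs => ?_
    · have hXh := (hX b).comp_isTree hh.isTree
      obtain rfl | hbj := eq_or_ne b j
      · simpa [Y] using hXh.compl
      · simpa [Y, hbj] using hXh
    · rw [hY]
      exact (hhJ s (hs.trans (Finset.le_sup (Finset.mem_univ _)))).2
  obtain ⟨f, U, hU, hf, hfl⟩ :=
    hdense.of_comp (hh.mono (Finset.le_sup (f := r) (Finset.mem_univ _)) le_rfl)
  obtain ⟨c, w, hcw, hpos⟩ := hd (μ.cond U hU) (fun t => E (f t)) hfl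
  obtain ⟨c', w', hcw', heq⟩ := hf.exists_lineEvent_eq E hcw
  rw [heq, ProbContent.cond_pos_iff] at hpos
  exact ⟨c', w', hcw', hpos.trans_le (μ.mono Set.inter_subset_left)⟩

end Increment

section Branch

variable {α β γ : Type*} {M : ℕ}

/-- Letters over `α ⊕ Fin M` act on words `x`: letters of `α` are translated by `e`, and the letter
`inr i` stands for the `i`-th letter of `x`. -/
def decode (e : α → β) (o : α) (x : List β) : α ⊕ Fin M → β :=
  Sum.elim e fun i => x.getD i (e o)

/-- The word `x`, padded to length `M + 1` with the letter `o` and continued by a word whose letters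
may refer to `x`. -/
def branch (e : α → β) (o : α) (y : List (α ⊕ Fin M)) (x : List β) : List β :=
  x.rightpad (M + 1) (e o) ++ y.map (decode e o x)

lemma comp_decode (φ : β → γ) (e : α → β) (o : α) (x : List β) :
    φ ∘ decode (M := M) e o x = decode (φ ∘ e) o (x.map φ) := by
  ext (a | i) <;> simp [decode]

lemma map_branch (φ : β → γ) (e : α → β) (o : α) (y : List (α ⊕ Fin M)) (x : List β) :
    (branch e o y x).map φ = branch (φ ∘ e) o y (x.map φ) := by
  simp [branch, ← comp_decode, List.rightpad]

variable {c : List α} {w : List (Option α)}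

/-- A line over `α` as a variable word over `Option α`. -/
def lineWord (c : List α) (w : List (Option α)) : List (Option (Option α)) :=
  c.map (some ∘ some) ++ none :: w.map (Option.map some)

lemma fill_lineWord (c : List α) (w : List (Option α)) (b : Option α) :
    fill (lineWord c w) b = c.map some ++ b :: fill (w.map (Option.map some)) b := by
  simp [lineWord, ← List.map_map]

lemma fill_lineWord_some (c : List α) (w : List (Option α)) (a : α) :
    fill (lineWord c w) (some a) = (c ++ a :: fill w a).map some := by
  rw [fill_lineWord, ← map_fill, List.map_append, List.map_cons]

/-- The variable word with which the line of `c` and `w`, branched by `y`, continues. -/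
def branchWord (o : α) (c : List α) (w : List (Option α)) (y : List (α ⊕ Fin M)) :
    List (Option (Option α)) :=
  (w.map (Option.map some)).rightpad (M - c.length) (some (some o)) ++
    y.map (decode (some ∘ some) o (lineWord c w))

lemma length_branchWord (h : c.length + 1 + w.length ≤ M) (o : α) (y : List (α ⊕ Fin M)) :
    c.length + 1 + (branchWord o c w y).length = M + 1 + y.length := by
  simp only [branchWord, List.rightpad, List.length_append, List.length_replicate, List.length_map]
  omega

lemma append_cons_fill_branchWord (o : α) (c : List α) (w : List (Option α))
    (y : List (α ⊕ Fin M)) (b : Option α) :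
    c.map some ++ b :: fill (branchWord o c w y) b = branch some o y (fill (lineWord c w) b) := by
  have hsome : (·.getD b) ∘ (some ∘ some) = (some : α → Option α) := rfl
  have hword : branch (some ∘ some) o y (lineWord c w)
      = c.map (some ∘ some) ++ none :: branchWord o c w y := by
    simp only [branch, branchWord, lineWord, rightpad_append_cons, List.length_map,
      Function.comp_apply, List.append_assoc, List.cons_append]
  have := congrArg (fill · b) hword
  simp only [fill, map_branch, List.map_append, List.map_map, List.map_cons, hsome] at this
  exact this.symm

/-- The letters over `Option α` as letters of branches of the line of `c`: the variable becomes a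
copy of the letter after `c`. -/
def copyVar (h : c.length < M) : Option α → α ⊕ Fin M :=
  fun x => x.elim (Sum.inr ⟨c.length, h⟩) Sum.inl

lemma decode_copyVar (o : α) (w : List (Option α)) (h : c.length < M) (b x : Option α) :
    decode some o (fill (lineWord c w) b) (copyVar h x) = x.or b := by
  cases x <;> simp [decode, copyVar, fill_lineWord]

lemma branch_lineWord_congr {V : List (α ⊕ Fin M) → List (α ⊕ Fin M)} (hV : IsTree V)
    (o : α) (w : List (Option α)) (h : c.length < M) {a : α} {s s' : List (Option α)}
    (hs : fill s a = fill s' a) :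
    branch some o (V (s.map (copyVar h))) (fill (lineWord c w) (some a))
      = branch some o (V (s'.map (copyVar h))) (fill (lineWord c w) (some a)) := by
  have hmap (s : List (Option α)) : (s.map (copyVar h)).map
      (decode some o (fill (lineWord c w) (some a))) = (fill s a).map some := by
    rw [List.map_map, show fill s a = s.map (·.getD a) from rfl, List.map_map]
    refine List.map_congr_left fun x _ => (decode_copyVar o w h (some a) x).trans ?_
    cases x <;> rfl
  rw [branch, branch, hV.map_congr _ ((hmap s).trans (hs ▸ (hmap s').symm))]

lemma isBoundedTree_branch_lineWord {q N : ℕ} {V : List (α ⊕ Fin M) → List (α ⊕ Fin M)}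
    (hV : IsBoundedTree q N V) (o : α) (h : c.length + 1 + w.length ≤ M) :
    IsBoundedTree q (M + 1 + N) fun s => branch some o
      (V (s.map (copyVar (show c.length < M by omega)))) (fill (lineWord c w) none) := by
  refine ((hV.conj_map _ fun x => ?_).append_left _).mono le_rfl ?_
  · simp [decode_copyVar]
  · simp only [List.rightpad, lineWord, fill_append, fill_cons, List.length_append,
      List.length_cons, length_fill, List.length_map, List.length_replicate]
    omega

end Branch

section Increment

variable {α : Type}

/-- The letters of the lines in the branches over a node `x` of `α` may refer to `x`, so that the
branches over the nodes of one line over `α` form a line over `Option α`. -/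
lemma HasDenseLines.exists_branching [Finite α] {δ : ℝ} (h : HasDenseLines α δ) (o : α) :
    ∃ (M : ℕ) (θ : ℝ), 0 < θ ∧ ∀ q : ℕ, ∃ N : ℕ,
      ∀ {Ω : Type} (μ : ProbContent Ω) (E : List (Option α) → Set Ω),
        (∀ x y, x ++ [some o] <+: y → y.length ≤ M + 1 + N → δ ≤ μ (E x ∩ E y)) →
        ∃ (c : List (Option α)) (W : List (Option α) → List (Option (Option α))),
          (∀ s, s.length ≤ q → c.length + 1 + (W s).length ≤ M + 1 + N) ∧
          (∀ a s s', fill s a = fill s' a → fill (W s) (some a) = fill (W s') (some a)) ∧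
          IsBoundedTree q (M + 1 + N) (fun s => c ++ none :: fill (W s) none) ∧
          ∀ s, s.length ≤ q → θ ≤ μ (⋂ a, E c ∩ E (c ++ some a :: fill (W s) (some a))) := by
  have : Nonempty α := ⟨o⟩
  obtain ⟨M, θ, hθ, hM⟩ := h
  refine ⟨M, θ, hθ, fun q => ?_⟩
  obtain ⟨N, hN⟩ := exists_tree_mono (α ⊕ Fin M) (BoundedWord α M × BoundedWord (Option α) M) q
  refine ⟨N, fun μ E hE => ?_⟩
  let G (y : List (α ⊕ Fin M)) (x : List α) := E (x.map some) ∩ E (branch some o y (x.map some))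
  obtain ⟨V, ⟨⟨c, _⟩, ⟨w, _⟩⟩, hV, hVθ⟩ := hN (fun y p =>
      p.1.1.length + 1 + p.2.1.length ≤ M ∧ θ ≤ μ (lineEvent (G y) p.1 p.2)) fun y hy => by
    obtain ⟨c, w, hcw, hθcw⟩ := hM μ (G y) fun x hx => hE _ _
      (append_singleton_prefix_rightpad_append (by simpa using hx) _) (by simp [branch]; omega)
    exact ⟨(⟨c, by omega⟩, ⟨w, by omega⟩), hcw, hθcw⟩
  have hcw : c.length + 1 + w.length ≤ M := (hVθ [] (Nat.zero_le _)).1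
  have hcM : c.length < M := by omega
  refine ⟨c.map some, fun s => branchWord o c w (V (s.map (copyVar hcM))), fun s hs => ?_,
    fun a s s' hs => ?_, ?_, fun s hs => ?_⟩
  · have := hV.length_le (s.map (copyVar hcM)) (by simpa using hs)
    rw [List.length_map, length_branchWord hcw]
    omega
  · have := branch_lineWord_congr hV.isTree o w hcM hs
    simpa only [← append_cons_fill_branchWord, List.append_cancel_left_eq, List.cons.injEq,
      true_and] using this
  · simpa only [append_cons_fill_branchWord] using isBoundedTree_branch_lineWord hV o hcw
  · refine (hVθ (s.map (copyVar hcM)) (by simpa using hs)).2.trans (μ.mono fun ω hω => ?_)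
    simp only [append_cons_fill_branchWord, fill_lineWord_some]
    exact Set.mem_iInter.2 fun a => ⟨hω.1.1, (Set.mem_iInter.1 hω.2 a).2⟩

lemma HasLines.mono {δ δ' : ℝ} (hδ : δ ≤ δ') (h : HasLines α δ) : HasLines α δ' := by
  obtain ⟨R, hR⟩ := h
  exact ⟨R, fun μ E hE => hR μ E fun x hx => hδ.trans (hE x hx)⟩

lemma inter_iInter_subset_lineEvent [Nonempty α] {Ω : Type*} (E : List (Option α) → Set Ω)
    (c : List (Option α)) (w : List (Option (Option α))) :
    E (c ++ none :: fill w none) ∩ ⋂ a, E c ∩ E (c ++ some a :: fill w (some a))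
      ⊆ lineEvent E c w := by
  rintro ω ⟨hω, hωX⟩
  rw [← Set.inter_iInter] at hωX
  exact ⟨hωX.1, Set.mem_iInter.2 fun b => b.rec hω (Set.mem_iInter.1 hωX.2)⟩

/-- If the events of `E` contain no line, then over each node `s` the intersection `X` of the
insensitive events is disjoint from `E`, which therefore has excess outside of `X`. -/
lemma HasLines.exists_option_of_add [Finite α] [Nonempty α] (h : ∀ δ : ℝ, 0 < δ → HasLines α δ)
    {δ₀ : ℝ} (hδ₀ : 0 < δ₀) : ∃ γ : ℝ, 0 < γ ∧
      ∀ δ, δ₀ ≤ δ → HasLines (Option α) (δ + γ) → HasLines (Option α) δ := by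
  obtain ⟨o⟩ := ‹Nonempty α›
  have := Fintype.ofFinite α
  obtain ⟨δ', hδ', hpair⟩ := exists_tree_inter_ge (some o) hδ₀
  obtain ⟨M, θ, hθ, hM⟩ := ((h _ (half_pos hδ')).hasDenseLines hδ').exists_branching o
  have hcard : (0 : ℝ) < Fintype.card α := Nat.cast_pos.2 (Fintype.card_pos_iff.2 ⟨o⟩)
  set γ := δ₀ * θ / 4 with hγ
  have hγ0 : 0 < γ := by positivity
  refine ⟨γ, hγ0, fun δ hδ hlines => ?_⟩
  obtain ⟨q, hq⟩ := hlines.exists_of_le_excess (by linarith) (hasDenseTrees h)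
    (κ := γ / Fintype.card α) (by positivity)
  obtain ⟨N, hN⟩ := hM q
  obtain ⟨R, hR⟩ := hpair (M + 1 + N)
  refine ⟨R, fun μ E hE => ?_⟩
  obtain ⟨f, hf, hff⟩ := hR μ E fun x hx => hδ.trans (hE x hx)
  by_contra! hzero
  replace hzero (c : List (Option α)) (w : List (Option (Option α)))
      (hcw : c.length + 1 + w.length ≤ M + 1 + N) : μ (lineEvent (fun t => E (f t)) c w) ≤ 0 := by
    obtain ⟨c', w', hcw', heq⟩ := hf.exists_lineEvent_eq E hcw
    exact heq ▸ hzero c' w' hcw'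
  obtain ⟨P, W, hW, hWa, htree, hθX⟩ := hN μ (fun t => E (f t)) hff
  let X (a : α) (s : List (Option α)) := E (f P) ∩ E (f (P ++ some a :: fill (W s) (some a)))
  obtain ⟨c, w, hcw, hpos⟩ := hq μ (fun s => E (f (P ++ none :: fill (W s) none))) X
    (fun a s s' hs => by simp only [X, hWa a s s' hs]) fun s hs => by
      refine μ.exists_le_excess_biInter_sdiff ?_
      rw [mul_div_cancel₀ _ hcard.ne']
      refine μ.excess_add_lt_excess_univ ?_ (hθX s hs) ?_ (by linarith) ?_
      · linarith [hE _ (hf.length_le _ (htree.length_le s hs))]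
      · exact (μ.mono (inter_iInter_subset_lineEvent _ P (W s))).trans (hzero P (W s) (hW s hs))
      · nlinarith
  obtain ⟨c', w', hcw', heq⟩ := htree.exists_lineEvent_eq (fun t => E (f t)) hcw
  exact absurd hpos (not_lt.2 (heq ▸ hzero c' w' hcw'))

lemma hasLines_option [Finite α] [Nonempty α] (h : ∀ δ : ℝ, 0 < δ → HasLines α δ) {δ : ℝ}
    (hδ : 0 < δ) : HasLines (Option α) δ := by
  obtain ⟨γ, hγ, hstep⟩ := HasLines.exists_option_of_add h hδ
  obtain ⟨n, hn⟩ := exists_nat_gt (1 / γ)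
  rw [div_lt_iff₀ hγ] at hn
  have hdesc (j : ℕ) (hj : HasLines (Option α) (δ + j * γ)) : HasLines (Option α) δ := by
    induction j with
    | zero => simpa using hj
    | succ j ih =>
      refine ih (hstep _ (le_add_of_nonneg_right (by positivity)) (hj.mono (le_of_eq ?_)))
      push_cast
      ring
  refine hdesc n ⟨0, fun μ E hE => ?_⟩
  linarith [hE [] le_rfl, μ.le_one (E [])]

lemma hasLines_of_subsingleton [Subsingleton α] [Nonempty α] {δ : ℝ} (hδ : 0 < δ) :
    HasLines α δ := by
  obtain ⟨o⟩ := ‹Nonempty α›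
  obtain ⟨n, δ', hδ', hn⟩ := ProbContent.exists_inter_ge hδ
  refine ⟨n, fun μ E hE => ?_⟩
  obtain ⟨i, j, hij, hj, hμ⟩ := hn μ (fun i => E (List.replicate i o))
    fun i hi => hE _ (by simpa using hi)
  refine ⟨List.replicate i o, (List.replicate (j - i - 1) o).map some, by simp; omega,
    hδ'.trans_le (hμ.trans (μ.mono fun ω hω => ⟨hω.1, Set.mem_iInter.2 fun a => ?_⟩))⟩
  rw [fill_map_some, Subsingleton.elim a o, ← List.replicate_succ, ← List.replicate_add]
  convert hω.2 using 3
  omega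

lemma HasLines.of_equiv {β : Type} (e : α ≃ β) {δ : ℝ} (h : HasLines α δ) : HasLines β δ := by
  obtain ⟨R, hR⟩ := h
  refine ⟨R, fun μ E hE => ?_⟩
  obtain ⟨c, w, hcw, hpos⟩ := hR μ (fun x => E (x.map e)) fun x hx => hE _ (by simpa using hx)
  refine ⟨c.map e, w.map (Option.map e), by simpa using hcw, hpos.trans_le (μ.mono fun ω hω => ?_)⟩
  refine ⟨hω.1, Set.mem_iInter.2 fun b => ?_⟩
  have : ω ∈ E ((c ++ e.symm b :: fill w (e.symm b)).map e) := Set.mem_iInter.1 hω.2 (e.symm b)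
  rwa [List.map_append, List.map_cons, map_fill, e.apply_symm_apply] at this

/-- The density Hales–Jewett theorem. -/
theorem hasLines (α : Type) [Finite α] [Nonempty α] {δ : ℝ} (hδ : 0 < δ) : HasLines α δ := by
  refine Finite.induction_empty_option (P := fun α => Nonempty α → ∀ δ : ℝ, 0 < δ → HasLines α δ)
    ?_ ?_ ?_ α ‹_› δ hδ
  · exact fun e ih hβ δ hδ => (ih (e.nonempty_congr.2 hβ) δ hδ).of_equiv e
  · exact fun h => h.elim fun x => x.elim
  · intro α _ ih _ δ hδ
    rcases isEmpty_or_nonempty α with _ | hα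
    · exact hasLines_of_subsingleton hδ
    · exact hasLines_option (ih hα) hδ

end Increment

/-! ### Uniform distributions and walks -/

section Uniform

open Filter Finset
open scoped BigOperators

variable {α : Type*} [Fintype α]

/-- The average of `F` over the words of length `n`. -/
noncomputable def wordAvg (n : ℕ) (F : List α → ℝ) : ℝ := 𝔼 x : Fin n → α, F (List.ofFn x)

variable {n : ℕ} {F G : List α → ℝ}

lemma wordAvg_congr (h : ∀ x, x.length = n → F x = G x) : wordAvg n F = wordAvg n G :=
  expect_congr rfl fun _ _ => h _ List.length_ofFn

lemma wordAvg_le_wordAvg (h : ∀ x, x.length = n → F x ≤ G x) : wordAvg n F ≤ wordAvg n G :=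
  expect_le_expect fun _ _ => h _ List.length_ofFn

lemma wordAvg_const_mul (c : ℝ) (F : List α → ℝ) :
    wordAvg n (fun x => c * F x) = c * wordAvg n F :=
  (mul_expect _ _ _).symm

lemma wordAvg_sub_distrib (F G : List α → ℝ) :
    wordAvg n (fun x => F x - G x) = wordAvg n F - wordAvg n G :=
  expect_sub_distrib _ _ _

lemma wordAvg_append (m n : ℕ) (F : List α → ℝ) :
    wordAvg (m + n) F = wordAvg m fun z => wordAvg n fun y => F (z ++ y) := by
  simp only [wordAvg, ← List.ofFn_fin_append]
  rw [← expect_product', univ_product_univ]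
  exact (Fintype.expect_equiv (Fin.appendEquiv m n) _ _ fun _ => rfl).symm

lemma le_card_pow_mul_wordAvg (hF : ∀ x, 0 ≤ F x) (q : List α) :
    F q ≤ Fintype.card α ^ q.length * wordAvg q.length F := by
  have hsum : F (List.ofFn q.get) ≤ ∑ x : Fin q.length → α, F (List.ofFn x) :=
    single_le_sum (f := fun x => F (List.ofFn x)) (fun _ _ => hF _) (mem_univ q.get)
  have hcard := Fintype.card_mul_expect fun x : Fin q.length → α => F (List.ofFn x)
  rw [Fintype.card_fun, Fintype.card_fin, Nat.cast_pow] at hcard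
  rw [List.ofFn_get] at hsum
  rwa [wordAvg, hcard]

lemma exists_lt_of_lt_wordAvg [Nonempty α] {c : ℝ} (h : c < wordAvg n F) :
    ∃ x, x.length = n ∧ c < F x := by
  obtain ⟨x, -, hx⟩ := exists_lt_of_lt_expect univ_nonempty h
  exact ⟨_, List.length_ofFn, hx⟩

variable [Nonempty α]

@[simp] lemma wordAvg_const (n : ℕ) (c : ℝ) : wordAvg n (fun _ : List α => c) = c :=
  expect_const univ_nonempty c

/-- The uniform distribution on the words of length `n`. -/
noncomputable def uniform (n : ℕ) : ProbContent (List α) where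
  toFun S := wordAvg n (S.indicator 1)
  nonneg' S := expect_nonneg fun _ _ => Set.indicator_nonneg (fun _ _ => zero_le_one) _
  union' S T h := by
    rw [Set.indicator_union_of_disjoint h]
    exact expect_add_distrib _ _ _
  univ' := by
    rw [Set.indicator_univ]
    exact wordAvg_const n 1

lemma uniform_apply (n : ℕ) (S : Set (List α)) : uniform n S = wordAvg n (S.indicator 1) := rfl

lemma uniform_append (m n : ℕ) (S : Set (List α)) :
    uniform (m + n) S = wordAvg m fun z => uniform n {y | z ++ y ∈ S} :=
  wordAvg_append m n _

lemma uniform_eq_ncard_div (n : ℕ) (S : Set (List α)) :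
    uniform n S = {x ∈ S | x.length = n}.ncard / (Fintype.card α : ℝ) ^ n := by
  classical
  have himage : {x ∈ S | x.length = n} = List.ofFn '' {f : Fin n → α | List.ofFn f ∈ S} := by
    ext x
    refine ⟨?_, ?_⟩
    · rintro ⟨hx, rfl⟩
      exact ⟨x.get, by simpa using hx, List.ofFn_get x⟩
    · rintro ⟨f, hf, rfl⟩
      exact ⟨hf, List.length_ofFn⟩
  rw [himage, Set.ncard_image_of_injective _ List.ofFn_injective, Set.ncard_eq_toFinset_card',
    uniform_apply, wordAvg, Fintype.expect_eq_sum_div_card, Fintype.card_fun, Fintype.card_fin]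
  simp [Set.indicator_apply, sum_boole]

/-- The limit of the uniform distributions along an ultrafilter. -/
noncomputable def limUniform (α : Type*) [Fintype α] [Nonempty α] (U : Ultrafilter ℕ) :
    ProbContent (List α) :=
  .lim U uniform

variable {U : Ultrafilter ℕ}

lemma tendsto_limUniform (U : Ultrafilter ℕ) (S : Set (List α)) :
    Tendsto (fun n => uniform n S) U (nhds (limUniform α U S)) :=
  ProbContent.tendsto_lim U uniform S

lemma map_sub_le_atTop (hU : ↑U ≤ (atTop : Filter ℕ)) (m : ℕ) :
    ↑(U.map (· - m)) ≤ (atTop : Filter ℕ) :=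
  (tendsto_sub_atTop_nat m).mono_left hU

lemma map_sub_map_sub (U : Ultrafilter ℕ) (l m : ℕ) :
    (U.map (· - l)).map (· - m) = U.map (· - (l + m)) := by
  rw [Ultrafilter.map_map]
  congr 1
  ext n
  exact Nat.sub_sub n l m

lemma limUniform_eq_wordAvg (hU : ↑U ≤ (atTop : Filter ℕ)) (m : ℕ) (S : Set (List α)) :
    limUniform α U S = wordAvg m fun z => limUniform α (U.map (· - m)) {y | z ++ y ∈ S} := by
  refine tendsto_nhds_unique (tendsto_limUniform U S) ?_
  have : Tendsto (fun n => wordAvg m fun z => uniform (n - m) {y | z ++ y ∈ S}) U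
      (nhds (wordAvg m fun z => limUniform α (U.map (· - m)) {y | z ++ y ∈ S})) := by
    simp only [wordAvg, expect_eq_sum_div_card]
    exact (tendsto_finsetSum _ fun x _ =>
      tendsto_map'_iff.1 (tendsto_limUniform (U.map (· - m)) _)).div_const _
  refine this.congr' ?_
  filter_upwards [hU (eventually_ge_atTop m)] with n hn
  rw [← uniform_append, Nat.add_sub_cancel' hn]

end Uniform

section Walk

variable {α : Type*}

/-- The walk along the letters of `y` steered by `x`: the stream `hs` says how many letters of `y`
to copy before each letter `a` of `x` and after the last one, and in place of `a` the walk writes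
`p(a)` over the next letters of `y`. -/
def walk (p : List (Option α)) : Stream' ℕ → List α → List α → List α
  | hs, [], y => y.take hs.head
  | hs, a :: x, y =>
    y.take hs.head ++ fill p a ++ walk p hs.tail x (y.drop (hs.head + p.length))

variable (p : List (Option α))

lemma exists_walk_append (m : ℕ) (hs : Stream' ℕ) : ∃ H : ℕ, ∀ x, x.length ≤ m → ∀ z, H ≤ z.length →
    (walk p hs x z).length ≤ z.length ∧ ∀ y, walk p hs x (z ++ y) = walk p hs x z := by
  induction m generalizing hs with
  | zero =>
    refine ⟨hs.head, fun x hx z hz => ?_⟩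
    obtain rfl : x = [] := by simpa using hx
    exact ⟨List.length_take_le' _ _, fun y => List.take_append_of_le_length hz⟩
  | succ m ih =>
    obtain ⟨H, hH⟩ := ih hs.tail
    refine ⟨hs.head + p.length + H, fun x hx z hz => ?_⟩
    cases x with
    | nil => exact ⟨List.length_take_le' _ _, fun y => List.take_append_of_le_length (by omega)⟩
    | cons a x =>
      obtain ⟨hlen, happ⟩ := hH x (by simpa using hx) (z.drop (hs.head + p.length))
        (by rw [List.length_drop]; omega)
      rw [List.length_drop] at hlen
      refine ⟨by simp [walk]; omega, fun y => ?_⟩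
      rw [walk, walk, List.take_append_of_le_length (by omega),
        List.drop_append_of_le_length (by omega), happ]

lemma exists_walk_fill_eq (w : List (Option α)) (hs : Stream' ℕ) (y : List α) :
    ∃ W, ∀ a, walk p hs (fill w a) y = fill W a := by
  induction w generalizing hs y with
  | nil => exact ⟨(y.take hs.head).map some, fun a => (fill_map_some _ a).symm⟩
  | cons o w ih =>
    obtain ⟨W, hW⟩ := ih hs.tail (y.drop (hs.head + p.length))
    exact ⟨(y.take hs.head).map some ++ p.map (·.or o) ++ W, fun a => by
      rw [fill_cons, walk, hW, fill_getD, fill_append, fill_append, fill_map_some]⟩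

lemma exists_walk_line_eq (w : List (Option α)) (c : List α) (hs : Stream' ℕ) (y : List α) :
    ∃ W, p <+: W ∧ ∀ a, walk p hs (c ++ a :: fill w a) y = walk p hs c y ++ fill W a := by
  induction c generalizing hs y with
  | nil =>
    obtain ⟨W, hW⟩ := exists_walk_fill_eq p w hs.tail (y.drop (hs.head + p.length))
    exact ⟨p ++ W, List.prefix_append _ _, fun a => by simp [walk, hW]⟩
  | cons b c ih =>
    obtain ⟨W, hpW, hW⟩ := ih hs.tail (y.drop (hs.head + p.length))
    exact ⟨W, hpW, fun a => by simp [walk, hW]⟩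

/-- The event that a random word `y` has its walk in `A` and, once the walk has been written over
the beginning of `y`, lies in `A` itself. -/
def walkEvent (hs : Stream' ℕ) (A : Set (List α)) (x : List α) : Set (List α) :=
  {y | walk p hs x y ∈ A ∧ walk p hs x y ++ y.drop (walk p hs x y).length ∈ A}

variable {p} {A : Set (List α)} {hs : Stream' ℕ} {h : ℕ} {z : List α}

lemma append_mem_walkEvent_nil (hz : z.length = h) (y : List α) :
    z ++ y ∈ walkEvent p (.cons h hs) A [] ↔ z ∈ A ∧ z ++ y ∈ A := by
  subst hz
  simp [walkEvent, walk]

lemma append_append_mem_walkEvent_cons (hz : z.length = h) {q : List α}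
    (hq : q.length = p.length) (a : α) (x y : List α) :
    z ++ (q ++ y) ∈ walkEvent p (.cons h hs) A (a :: x) ↔
      y ∈ walkEvent p hs {v | z ++ fill p a ++ v ∈ A} x := by
  subst hz
  have hwalk : walk p (.cons z.length hs) (a :: x) (z ++ (q ++ y))
      = z ++ fill p a ++ walk p hs x y := by
    simp [walk, ← hq]
  have hdrop : (z ++ (q ++ y)).drop (z ++ fill p a ++ walk p hs x y).length
      = y.drop (walk p hs x y).length := by
    rw [List.length_append, List.length_append, length_fill, ← hq, ← List.append_assoc,
      ← List.length_append, List.drop_length_add_append]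
  rw [walkEvent, Set.mem_ofPred_eq, hwalk, hdrop]
  simp only [walkEvent, Set.mem_ofPred_eq, List.append_assoc]

lemma exists_lineEvent_walkEvent_subset (p : List (Option α)) (hs : Stream' ℕ) (A : Set (List α))
    (c : List α) (w : List (Option α)) :
    ∃ H : ℕ, ∀ z : List α, H ≤ z.length → ∃ c' w', p <+: w' ∧
      ∀ y, z ++ y ∈ lineEvent (walkEvent p hs A) c w →
        c' ∈ A ∧ ∀ a, c' ++ fill w' a ++ y ∈ A := by
  obtain ⟨H, hH⟩ := exists_walk_append p (c.length + 1 + w.length) hs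
  refine ⟨H, fun z hz => ?_⟩
  obtain ⟨W, hpW, hW⟩ := exists_walk_line_eq p w c hs z
  refine ⟨walk p hs c z, W ++ (z.drop ((walk p hs c z).length + W.length)).map some,
    hpW.trans (List.prefix_append _ _), fun y hy => ⟨?_, fun a => ?_⟩⟩
  · exact (hH c (by omega) z hz).2 y ▸ hy.1.1
  · obtain ⟨hlen, happ⟩ := hH (c ++ a :: fill w a) (length_append_cons_fill c a a w).le z hz
    have := (Set.mem_iInter.1 hy.2 a).2
    rw [happ, List.drop_append_of_le_length hlen, hW] at this
    simpa only [fill_append, fill_map_some, List.length_append, length_fill, List.append_assoc]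
      using this

end Walk

section RelDens

open Filter

variable {α : Type*} [Fintype α] [Nonempty α] {U : Ultrafilter ℕ}

/-- The relative density of `A` below the word `u`. As `U` is not shift invariant, the lengths of
the words after `u` have to be shifted. -/
noncomputable def relDens (U : Ultrafilter ℕ) (A : Set (List α)) (u : List α) : ℝ :=
  limUniform α (U.map (· - u.length)) {y | u ++ y ∈ A}

variable {A : Set (List α)} {p : List (Option α)}

lemma limUniform_eq_wordAvg_of_length {u : List α} (hU : ↑U ≤ (atTop : Filter ℕ)) (h : ℕ)
    (S : Set (List α)) : limUniform α (U.map (· - u.length)) S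
      = wordAvg h fun z => limUniform α (U.map (· - (u ++ z).length)) {y | z ++ y ∈ S} := by
  rw [limUniform_eq_wordAvg (map_sub_le_atTop hU _) h]
  refine wordAvg_congr fun z hz => ?_
  rw [map_sub_map_sub, List.length_append, hz]

lemma wordAvg_relDens (hU : ↑U ≤ (atTop : Filter ℕ)) (A : Set (List α)) (u : List α) (h : ℕ) :
    wordAvg h (fun z => relDens U A (u ++ z)) = relDens U A u := by
  simp only [relDens, limUniform_eq_wordAvg_of_length (u := u) hU h, List.append_assoc,
    Set.mem_ofPred_eq]

lemma wordAvg_sub_relDens (hU : ↑U ≤ (atTop : Filter ℕ)) (A : Set (List α)) (u : List α) (h : ℕ)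
    (s : ℝ) : wordAvg h (fun z => s - relDens U A (u ++ z)) = s - relDens U A u := by
  rw [wordAvg_sub_distrib, wordAvg_const, wordAvg_relDens hU]

lemma sub_relDens_append_le (hU : ↑U ≤ (atTop : Filter ℕ)) {s : ℝ} (hs : ∀ u, relDens U A u ≤ s)
    (u q : List α) : s - relDens U A (u ++ q)
      ≤ (Fintype.card α : ℝ) ^ q.length * (s - relDens U A u) := by
  rw [← wordAvg_sub_relDens hU A u q.length s]
  exact le_card_pow_mul_wordAvg (fun z => sub_nonneg.2 (hs _)) q

lemma exists_relDens_sub_le_uniform (U : Ultrafilter ℕ) (A : Set (List α)) {ε : ℝ} (hε : 0 < ε)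
    (l : ℕ) : ∃ h : ℕ, ∀ u : List α, u.length = l →
      relDens U A u - ε ≤ uniform h {y | u ++ y ∈ A} := by
  have : ∀ᶠ h in (U.map (· - l) : Filter ℕ), ∀ u ∈ {u : List α | u.length = l},
      relDens U A u - ε ≤ uniform h {y | u ++ y ∈ A} := by
    rw [eventually_all_finite (List.finite_length_eq α l)]
    rintro u rfl
    exact ((tendsto_limUniform _ _).eventually (lt_mem_nhds (sub_lt_self _ hε))).mono
      fun h hh => hh.le
  exact this.exists

/-- The probability of the event `walkEvent` below the word `u`. -/
noncomputable def walkDens (U : Ultrafilter ℕ) (A : Set (List α)) (p : List (Option α))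
    (hs : Stream' ℕ) (x u : List α) : ℝ :=
  limUniform α (U.map (· - u.length)) (walkEvent p hs {v | u ++ v ∈ A} x)

lemma walkDens_nil (hU : ↑U ≤ (atTop : Filter ℕ)) (A : Set (List α)) (p : List (Option α)) (h : ℕ)
    (hs : Stream' ℕ) (u : List α) : walkDens U A p (.cons h hs) [] u
      = wordAvg h fun z => {z | u ++ z ∈ A}.indicator (fun z => relDens U A (u ++ z)) z := by
  rw [walkDens, limUniform_eq_wordAvg_of_length hU h]
  refine wordAvg_congr fun z hz => ?_
  simp only [append_mem_walkEvent_nil hz, Set.mem_ofPred_eq]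
  by_cases hzA : u ++ z ∈ A <;> simp [hzA, relDens]

lemma walkDens_cons (hU : ↑U ≤ (atTop : Filter ℕ)) (A : Set (List α)) (p : List (Option α)) (h : ℕ)
    (hs : Stream' ℕ) (a : α) (x u : List α) : walkDens U A p (.cons h hs) (a :: x) u
      = wordAvg h fun z => walkDens U A p hs x (u ++ z ++ fill p a) := by
  rw [walkDens, limUniform_eq_wordAvg_of_length hU h]
  refine wordAvg_congr fun z hz => ?_
  rw [limUniform_eq_wordAvg_of_length hU p.length]
  refine (wordAvg_congr fun q hq => ?_).trans (wordAvg_const p.length _)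
  simp only [Set.mem_ofPred_eq, append_append_mem_walkEvent_cons hz hq, walkDens,
    List.length_append, length_fill, hq, List.append_assoc, Set.ofPred_mem_eq]

/-- Since `1_A d ≥ s 1_A - (s - d)` for `0 ≤ d ≤ s ≤ 1`. -/
lemma sq_sub_le_walkDens_nil (hU : ↑U ≤ (atTop : Filter ℕ)) {s ε : ℝ} (hs : ∀ u, relDens U A u ≤ s)
    (hs₀ : 0 ≤ s) (hs₁ : s ≤ 1) (hε : 0 ≤ ε) {u : List α} (hu : s - ε ≤ relDens U A u) {h : ℕ}
    (hh : relDens U A u - ε ≤ uniform h {y | u ++ y ∈ A}) (hs' : Stream' ℕ) :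
    s ^ 2 - 3 * ε ≤ walkDens U A p (.cons h hs') [] u := calc
  s ^ 2 - 3 * ε ≤ s * uniform h {y | u ++ y ∈ A} - (s - relDens U A u) := by nlinarith
  _ = wordAvg h fun z => s * {y | u ++ y ∈ A}.indicator 1 z - (s - relDens U A (u ++ z)) := by
    rw [wordAvg_sub_distrib, wordAvg_const_mul, wordAvg_sub_relDens hU, uniform_apply]
  _ ≤ wordAvg h fun z => {z | u ++ z ∈ A}.indicator (fun z => relDens U A (u ++ z)) z :=
    wordAvg_le_wordAvg fun z _ => by
      have := hs (u ++ z)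
      by_cases hz : u ++ z ∈ A <;> simp [hz, this]
  _ = walkDens U A p (.cons h hs') [] u := (walkDens_nil hU A p h hs' u).symm

/-- The words `u ++ z` of relative density close to `s` are continued by `ih`. The average of the
deficit `s - relDens U A (u ++ z)` is the deficit of `u`, so that few words `z` are lost. -/
lemma sq_sub_le_walkDens_cons (hU : ↑U ≤ (atTop : Filter ℕ)) {s ε η : ℝ}
    (hs : ∀ u, relDens U A u ≤ s) (hs₀ : 0 ≤ s) (hs₁ : s ≤ 1) (hε : 0 < ε) (hη : 0 ≤ η)
    {u x : List α} {h : ℕ} {hs' : Stream' ℕ} {a : α}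
    (ih : ∀ z : List α, z.length = h →
      s - Fintype.card α ^ p.length * ε < relDens U A (u ++ z ++ fill p a) →
        s ^ 2 - η ≤ walkDens U A p hs' x (u ++ z ++ fill p a)) :
    s ^ 2 - η - 1 / ε * (s - relDens U A u) ≤ walkDens U A p (.cons h hs') (a :: x) u := by
  rw [walkDens_cons hU, ← wordAvg_sub_relDens hU A u h, ← wordAvg_const_mul,
    ← wordAvg_const (α := α) h (s ^ 2 - η), ← wordAvg_sub_distrib]
  refine wordAvg_le_wordAvg fun z hz => ?_
  rcases lt_or_ge (s - relDens U A (u ++ z)) ε with hlt | hge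
  · have hchild := sub_relDens_append_le hU hs (u ++ z) (fill p a)
    rw [length_fill] at hchild
    have hcard : (0 : ℝ) < Fintype.card α ^ p.length := pow_pos (mod_cast Fintype.card_pos) _
    have hdeficit : 0 ≤ 1 / ε * (s - relDens U A (u ++ z)) :=
      mul_nonneg (by positivity) (sub_nonneg.2 (hs _))
    linarith [ih z hz (by linarith [mul_lt_mul_of_pos_left hlt hcard])]
  · have hdeficit : 1 ≤ 1 / ε * (s - relDens U A (u ++ z)) := by
      rwa [one_div, inv_mul_eq_div, one_le_div hε]
    have hnonneg : 0 ≤ walkDens U A p hs' x (u ++ z ++ fill p a) := ProbContent.nonneg _ _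
    linarith [pow_le_one₀ (n := 2) hs₀ hs₁]

lemma exists_sq_sub_le_walkDens (hU : ↑U ≤ (atTop : Filter ℕ)) {s : ℝ}
    (hs : ∀ u, relDens U A u ≤ s) (hs₀ : 0 ≤ s) (hs₁ : s ≤ 1) (p : List (Option α)) (r : ℕ)
    {η : ℝ} (hη : 0 < η) : ∃ ε, 0 < ε ∧ ∀ l, ∃ hs' : Stream' ℕ, ∀ u : List α, u.length = l →
      s - ε < relDens U A u → ∀ x, x.length ≤ r → s ^ 2 - η ≤ walkDens U A p hs' x u := by
  induction r generalizing η with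
  | zero =>
    refine ⟨η / 3, by positivity, fun l => ?_⟩
    obtain ⟨h, hh⟩ := exists_relDens_sub_le_uniform U A (by positivity : 0 < η / 3) l
    refine ⟨.const h, fun u hu hus x hx => ?_⟩
    obtain rfl : x = [] := by simpa using hx
    rw [Stream'.const_eq]
    linarith [sq_sub_le_walkDens_nil (p := p) hU hs hs₀ hs₁ (by positivity) hus.le (hh u hu)
      (.const h)]
  | succ r ih =>
    obtain ⟨ε', hε', ih⟩ := ih (half_pos hη)
    have hcard : (0 : ℝ) < Fintype.card α ^ p.length := pow_pos (mod_cast Fintype.card_pos) _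
    set ε₁ := ε' / Fintype.card α ^ p.length with hε₁
    have hε₁0 : 0 < ε₁ := by positivity
    set ε := min (η / 3) (ε₁ * (η / 2))
    have hε0 : 0 < ε := lt_min (by positivity) (by positivity)
    refine ⟨ε, hε0, fun l => ?_⟩
    obtain ⟨h, hh⟩ := exists_relDens_sub_le_uniform U A hε0 l
    obtain ⟨hs', hhs'⟩ := ih (l + h + p.length)
    refine ⟨.cons h hs', fun u hu hus x hx => ?_⟩
    cases x with
    | nil =>
      linarith [sq_sub_le_walkDens_nil (p := p) hU hs hs₀ hs₁ hε0.le hus.le (hh u hu) hs',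
        min_le_left (η / 3) (ε₁ * (η / 2))]
    | cons a x =>
      have hcons := sq_sub_le_walkDens_cons (h := h) (u := u) (a := a) hU hs hs₀ hs₁ hε₁0
        (half_pos hη).le fun z hz hlt => hhs' (u ++ z ++ fill p a) (by simp [hu, hz]; omega)
          (by rwa [hε₁, mul_div_cancel₀ _ hcard.ne'] at hlt) x (by simpa using hx)
      have hdeficit : 1 / ε₁ * (s - relDens U A u) ≤ η / 2 := by
        rw [one_div, inv_mul_le_iff₀ hε₁0]
        linarith [min_le_right (η / 3) (ε₁ * (η / 2))]
      linarith

end RelDens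

section Large

open Filter

variable {α : Type} [Fintype α] [Nonempty α] {A : Set (List α)}

/-- A set of words of positive density along some ultrafilter, that is, of positive upper density.
Carrying the ultrafilter along makes this stable under passing to tails of words. -/
def IsLarge (A : Set (List α)) : Prop :=
  ∃ U : Ultrafilter ℕ, ↑U ≤ (atTop : Filter ℕ) ∧ 0 < limUniform α U A

lemma isLarge_of_limsup_uniform_pos (h : 0 < atTop.limsup fun n => uniform n A) : IsLarge A := by
  have hbdd : IsBoundedUnder (· ≥ ·) atTop fun n => uniform n A :=
    isBoundedUnder_of ⟨0, fun _ => ProbContent.nonneg _ A⟩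
  obtain ⟨δ, hδ, hlt⟩ := exists_between h
  have : NeBot (atTop ⊓ 𝓟 {n | δ < uniform n A}) :=
    frequently_iff_neBot.1 (frequently_lt_of_lt_limsup hbdd.isCoboundedUnder_le hlt)
  have hU := Ultrafilter.of_le (atTop ⊓ 𝓟 {n | δ < uniform n A})
  refine ⟨_, hU.trans inf_le_left, hδ.trans_le <| ge_of_tendsto (tendsto_limUniform _ A) ?_⟩
  exact mem_of_superset (le_principal_iff.1 (hU.trans inf_le_right))
    fun n (hn : δ < uniform n A) => hn.le

/-- Density Hales–Jewett is applied to the walk events below a word `u` whose relative density is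
almost the supremum `s` of all relative densities, where these events have probability at least
`s ^ 2 / 2`. -/
lemma exists_lineEvent_walkEvent_pos {U : Ultrafilter ℕ} (hU : ↑U ≤ (atTop : Filter ℕ))
    (hA : 0 < limUniform α U A) (p : List (Option α)) : ∃ (u : List α) (hs : Stream' ℕ) (c : List α)
      (w : List (Option α)), 0 < limUniform α (U.map (· - u.length))
        (lineEvent (walkEvent p hs {v | u ++ v ∈ A}) c w) := by
  set s := ⨆ u, relDens U A u
  have hle : ∀ u, relDens U A u ≤ s :=
    le_ciSup ⟨1, Set.forall_mem_range.2 fun u => ProbContent.le_one _ _⟩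
  have hs₀ : 0 < s := hA.trans_le <| by simpa [relDens, Ultrafilter.map_id'] using hle []
  have hs₁ : s ≤ 1 := ciSup_le fun u => ProbContent.le_one _ _
  obtain ⟨R, hR⟩ := hasLines α (by positivity : 0 < s ^ 2 / 2)
  obtain ⟨ε, hε, hwalk⟩ := exists_sq_sub_le_walkDens hU hle hs₀.le hs₁ p R
    (by positivity : 0 < s ^ 2 / 2)
  obtain ⟨u, hu⟩ := exists_lt_of_lt_ciSup (sub_lt_self s hε)
  obtain ⟨hs, hhs⟩ := hwalk u.length
  obtain ⟨c, w, -, hpos⟩ := hR (limUniform α (U.map (· - u.length)))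
    (walkEvent p hs {v | u ++ v ∈ A}) fun x hx => by
      rw [← sub_half (s ^ 2)]
      exact hhs u rfl hu x hx
  exact ⟨u, hs, c, w, hpos⟩

lemma IsLarge.exists_fill_append_mem (hA : IsLarge A) (p : List (Option α)) :
    ∃ c ∈ A, ∃ w, p <+: w ∧ IsLarge {y | ∀ a, c ++ fill w a ++ y ∈ A} := by
  obtain ⟨U, hU, hA⟩ := hA
  obtain ⟨u, hs, c, w, hpos⟩ := exists_lineEvent_walkEvent_pos hU hA p
  obtain ⟨H, hH⟩ := exists_lineEvent_walkEvent_subset p hs {v | u ++ v ∈ A} c w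
  have hU' := map_sub_le_atTop hU u.length
  rw [limUniform_eq_wordAvg hU' H] at hpos
  obtain ⟨z, hz, hpos⟩ := exists_lt_of_lt_wordAvg hpos
  obtain ⟨c', w', hpw, hsub⟩ := hH z hz.ge
  obtain ⟨y, hy⟩ : Set.Nonempty {y | z ++ y ∈ lineEvent (walkEvent p hs {v | u ++ v ∈ A}) c w} := by
    rw [Set.nonempty_iff_ne_empty]
    intro hempty
    simp [hempty] at hpos
  refine ⟨u ++ c', (hsub y hy).1, w', hpw, _, map_sub_le_atTop hU' H,
    hpos.trans_le (ProbContent.mono _ fun y hy a => ?_)⟩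
  simpa using (hsub y hy).2 a

lemma append_flatten_fill_append {β : Type*} (c : ℕ → List β) (w : ℕ → List (Option β)) (a : ℕ → β)
    (n : ℕ) :
    c 0 ++ ((List.range n).map fun i => fill (w i ++ (c (i + 1)).map some) (a i)).flatten
      = ((List.range n).map fun i => c i ++ fill (w i) (a i)).flatten ++ c n := by
  induction n with
  | zero => simp
  | succ n ih =>
    rw [List.range_succ, List.map_append, List.flatten_append, ← List.append_assoc, ih]
    simp

theorem IsLarge.exists_seq_fill_mem (hA : IsLarge A) (p : ℕ → List (Option α)) :
    ∃ (c : List α) (w : ℕ → List (Option α)), (∀ n, p n <+: w n) ∧ ∀ (n : ℕ) (a : ℕ → α),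
      c ++ ((List.range n).map fun i => fill (w i) (a i)).flatten ∈ A := by
  choose c hc w hw hlarge using fun (n : ℕ) (B : {B : Set (List α) // IsLarge B}) =>
    B.2.exists_fill_append_mem (p n)
  let B : ℕ → {B : Set (List α) // IsLarge B} := Nat.rec ⟨A, hA⟩ fun n B => ⟨_, hlarge n B⟩
  refine ⟨c 0 (B 0), fun n => w n (B n) ++ (c (n + 1) (B (n + 1))).map some,
    fun n => (hw n _).trans (List.prefix_append _ _), fun n a => ?_⟩
  rw [append_flatten_fill_append (fun n => c n (B n)) (fun n => w n (B n))]
  suffices ∀ y ∈ (B n).1,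
      ((List.range n).map fun i => c i (B i) ++ fill (w i (B i)) (a i)).flatten ++ y ∈ A from
    this _ (hc n _)
  induction n with
  | zero => exact fun y hy => hy
  | succ n ih =>
    intro y hy
    have hmem : _ ++ (c n (B n) ++ fill (w n (B n)) (a n) ++ y) ∈ A := ih _ (hy (a n))
    simpa [List.range_succ] using hmem

end Large

lemma dens_eq_uniform {k : ℕ} [Nonempty (Fin k)] (n : ℕ) (A : Set (Word k)) :
    dens k n A = uniform n A := by
  rw [uniform_eq_ncard_div, Fintype.card_fin, dens]

end CarlsonSimpson

/-- **Theorem C**: the density Carlson–Simpson theorem for variable words of a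
prescribed pattern `(pₙ)`; `(wₙ)` is of pattern `(pₙ)` means `pₙ` is an initial
segment (`<+:`) of `wₙ` for every `n`. -/
theorem density_carlson_simpson_pattern (k : ℕ) (hk : 2 ≤ k)
    (p : ℕ → VWord k) (hp : ∀ n, IsVar (p n))
    (A : Set (Word k)) (hA : 0 < Filter.atTop.limsup (fun n : ℕ => dens k n A)) :
    ∃ (c : Word k) (w : ℕ → VWord k),
      (∀ n : ℕ, IsVar (w n) ∧ p n <+: w n) ∧ csSetInf c w ⊆ A := by
  have : Nonempty (Fin k) := ⟨⟨0, by omega⟩⟩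
  simp only [CarlsonSimpson.dens_eq_uniform] at hA
  obtain ⟨c, w, hpw, hmem⟩ :=
    (CarlsonSimpson.isLarge_of_limsup_uniform_pos hA).exists_seq_fill_mem p
  refine ⟨c, w, fun n => ⟨(hpw n).subset (hp n), hpw n⟩, ?_⟩
  rintro x (rfl | ⟨n, a, rfl⟩)
  · simpa using hmem 0 fun _ => Classical.arbitrary _
  · exact hmem (n + 1) a
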